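/- arXiv:1903.10399 — 2 statements merged into one kernel-verified Lean document; each statement's English description precedes it below -/
import Mathlib

section
/- (Convergence rate of the meta-algorithm with approximate gradients.) Under bounded inputs and Lipschitz loss with R, L > 0, let h̄_T be the output of Algorithm 2 run with step size γ = (√2 ‖ĥ‖/(L R)) · ( T (1 + 4(log n + 1)/n) )^{−1/2} for a fixed nonzero ĥ ∈ ℝ^d. Then E[ Ê_n(h̄_T) ] − Ê_n(ĥ) ≤ ‖ĥ‖ L R √( 2 (1 + 4(log n + 1)/n) / T ) + 2 R² L² (log n + 1)/(λ n), where Ê_n(h) = E_{μ∼ρ} E_{Z_n∼μ^n} L_{Z_n}(h) and the outer expectation is over the i.i.d. sampling of the T training tasks and datasets. -/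
open MeasureTheory Real
open scoped InnerProductSpace

noncomputable section

abbrev Vec (d : ℕ) := EuclideanSpace ℝ (Fin d)
abbrev Pt (d : ℕ) := Vec d × ℝ

/-- Empirical risk of `w` on the dataset `S`. -/
def empRisk {d n : ℕ} (ℓ : ℝ → ℝ → ℝ) (S : Fin n → Pt d) (w : Vec d) : ℝ :=
  (n : ℝ)⁻¹ * ∑ k, ℓ (⟪(S k).1, w⟫_ℝ) ((S k).2)

/-- Biased regularized empirical risk. -/
def regRisk {d n : ℕ} (ℓ : ℝ → ℝ → ℝ) (lam : ℝ) (S : Fin n → Pt d)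
    (h w : Vec d) : ℝ :=
  empRisk ℓ S w + lam / 2 * ‖w - h‖ ^ 2

/-- True risk of `w` under the task distribution `μ`. -/
def trueRisk {d : ℕ} (ℓ : ℝ → ℝ → ℝ) (μ : Measure (Pt d)) (w : Vec d) : ℝ :=
  ∫ z, ℓ (⟪z.1, w⟫_ℝ) (z.2) ∂μ

/-- `u` is a subgradient of `f : ℝ → ℝ` at `a`. -/
def IsSubgradAt (f : ℝ → ℝ) (u a : ℝ) : Prop :=
  ∀ b, f a + u * (b - a) ≤ f b

/-!
The approximate meta-gradient `g = -λ (w^{(n+1)} - h)` is the average of the vectors `u'_k x_k`, so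
its norm is at most `L R`. The subgradients `u'_k` are dual variables of the regularised problem,
and their dual value `D` at the bias `h` satisfies `D + ⟪g, h' - h⟫ ≤ L_{Z_n}(h')` for all `h'` by
weak duality. It remains to bound the gap `L_{Z_n}(h) - D` in expectation. To this end SGD is
compared with a path that rests for five steps and then moves along slopes of Moreau envelopes of
the losses. The position of this path before step `k` does not depend on the `k`-th data point, so
that its expected regularised loss there is at least the expectation of `L_{Z_n}(h)`, while a
quadratic potential bounds the excess of the averaged path losses over `D` by
`2 R² L² (log n + 1) / (λ n)`.

Hence `g` is, in expectation and up to this error, a subgradient of the convex transfer risk, and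
the standard analysis of SGD together with Jensen's inequality bounds the regret against `ĥ` by
`‖ĥ‖² / (2 γ T) + γ (L R)² / 2` plus the error. With `c = 1 + 4 (log n + 1) / n ≥ 1`, the stated
step size is the optimal one times `√(2 / c)`, which keeps the sum below the stated bound.

The loss itself need not be measurable in the label. Subtracting its value at the prediction `0`
makes it so, as a limit of Riemann sums of subgradients, and changes no difference of risks.
-/

/-- The error allowed to step `i` of the comparison, in units of `L² R² / λ`: the comparator rests
for five steps, since the bound `2 / (i + 1)` for a moving comparator only holds from then on. -/
def stepBudget (i : ℕ) : ℝ := if i < 5 then 1 else 2 / ((i : ℝ) + 1)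

lemma natCast_le_two_mul_log_add_one {n : ℕ} (h1 : 1 ≤ n) (h5 : n ≤ 5) :
    (n : ℝ) ≤ 2 * (Real.log n + 1) := by
  have := Real.log_two_gt_d9
  have := Real.log_three_gt_d9
  have := Real.log_four_eq
  have := Real.log_five_gt_d9
  interval_cases n <;> norm_num <;> linarith

lemma inv_add_one_le_log_add_one_sub_log {x : ℝ} (hx : 0 < x) :
    (x + 1)⁻¹ ≤ Real.log (x + 1) - Real.log x := by
  rw [← Real.log_div (by positivity) hx.ne']
  calc (x + 1)⁻¹ = 1 - ((x + 1) / x)⁻¹ := by field_simp; ring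
    _ ≤ _ := Real.one_sub_inv_le_log_of_pos (by positivity)

lemma sum_stepBudget_eq_natCast {n : ℕ} (hn : n ≤ 5) :
    ∑ i ∈ Finset.range n, stepBudget i = n := by
  have hrest : ∀ i ∈ Finset.range n, stepBudget i = 1 := fun i hi =>
    if_pos ((Finset.mem_range.1 hi).trans_le hn)
  simp [Finset.sum_congr rfl hrest]

lemma sum_stepBudget_le {n : ℕ} (hn : 1 ≤ n) :
    ∑ i ∈ Finset.range n, stepBudget i ≤ 2 * (Real.log n + 1) := by
  have hsmall : ∀ n, 1 ≤ n → n ≤ 5 →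
      ∑ i ∈ Finset.range n, stepBudget i ≤ 2 * (Real.log n + 1) := fun n h1 h5 => by
    rw [sum_stepBudget_eq_natCast h5]
    exact natCast_le_two_mul_log_add_one h1 h5
  rcases le_total n 5 with h5 | h5
  · exact hsmall n hn h5
  induction n, h5 using Nat.le_induction with
  | base => exact hsmall 5 hn le_rfl
  | succ n h5 ih =>
    have hlog := inv_add_one_le_log_add_one_sub_log (x := n) (by positivity)
    have ih := ih (by lia)
    rw [Finset.sum_range_succ, stepBudget, if_neg (by lia), div_eq_mul_inv]
    push_cast
    linarith

section Comparison

variable {E : Type*} [NormedAddCommGroup E] [InnerProductSpace ℝ E]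

lemma neg_norm_sq_div_le_inner_add {c : ℝ} (hc : 0 < c) (g v : E) :
    -(‖g‖ ^ 2 / (2 * c)) ≤ ⟪g, v⟫_ℝ + c / 2 * ‖v‖ ^ 2 := by
  have hsq : 0 ≤ ‖g + c • v‖ ^ 2 / (2 * c) := by positivity
  rw [norm_add_sq_real, norm_smul, real_inner_smul_right, mul_pow, Real.norm_eq_abs,
    sq_abs] at hsq
  have hid : (‖g‖ ^ 2 + 2 * (c * ⟪g, v⟫_ℝ) + c ^ 2 * ‖v‖ ^ 2) / (2 * c)
      = ‖g‖ ^ 2 / (2 * c) + ⟪g, v⟫_ℝ + c / 2 * ‖v‖ ^ 2 := by field_simp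
  linarith

lemma IsSubgradAt.abs_le {f : ℝ → ℝ} {u a L : ℝ} (hu : IsSubgradAt f u a)
    (hf : ∀ a b, |f a - f b| ≤ L * |a - b|) : |u| ≤ L := by
  have hright := hu (a + 1)
  have hleft := hu (a - 1)
  have hfright := (_root_.abs_le.1 (hf (a + 1) a)).2
  have hfleft := (_root_.abs_le.1 (hf (a - 1) a)).2
  simp only [add_sub_cancel_left, abs_one, mul_one, sub_sub_cancel_left, abs_neg]
    at hright hleft hfright hfleft
  exact _root_.abs_le.2 ⟨by linarith, by linarith⟩

/-- `m` is the slope at `c` of the Moreau envelope of `f` with parameter `τ`, that is, a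
subgradient of `f` at the proximal point `c - τ * m`. -/
def IsProxSlope (f : ℝ → ℝ) (τ m c : ℝ) : Prop := IsSubgradAt f m (c - τ * m)

lemma IsProxSlope.sub_add_mul_sub_le {φ : ℝ → ℝ} {L τ θ a b u m : ℝ}
    (hφ : ∀ a b, |φ a - φ b| ≤ L * |a - b|) (hτ : 0 ≤ τ) (hθ : 0 ≤ θ)
    (hm : IsProxSlope φ τ m a) (hu : IsSubgradAt φ u b) :
    φ a - φ b + m * (b - a) - θ * ((u - m) * (b - a))
      ≤ τ * (L * |m| - m ^ 2) + θ * (τ * ((u - m) * m)) := by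
  have hslope : φ (a - τ * m) + m * (b - (a - τ * m)) ≤ φ b := hm b
  have hlip : φ a - φ (a - τ * m) ≤ L * (τ * |m|) := by
    have := (abs_le.1 (hφ a (a - τ * m))).2
    rwa [sub_sub_cancel, abs_mul, abs_of_nonneg hτ] at this
  have hmono : 0 ≤ θ * ((u - m) * (b - (a - τ * m))) :=
    mul_nonneg hθ (by linarith [hu (a - τ * m)])
  linarith

/-- The potential of the comparison after `i` steps: `ω` is the displacement of SGD from its
bias and `v` that of the comparator. -/
def comparisonPotential (lam i : ℝ) (ω v : E) : ℝ :=
  lam / 2 * (i * ‖ω‖ ^ 2 + i * ‖ω - v‖ ^ 2 + ‖v‖ ^ 2)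

lemma norm_sq_inv_smul_smul_sub_smul (w x : E) (k c s : ℝ) :
    ‖k⁻¹ • (c • w - s • x)‖ ^ 2
      = (c ^ 2 * ‖w‖ ^ 2 - 2 * c * s * ⟪x, w⟫_ℝ + s ^ 2 * ‖x‖ ^ 2) / k ^ 2 := by
  rw [norm_smul, mul_pow, norm_sub_sq_real, norm_smul, norm_smul, real_inner_smul_left,
    real_inner_smul_right, real_inner_comm, mul_pow, mul_pow, norm_inv, inv_pow]
  simp only [Real.norm_eq_abs, sq_abs]
  ring

lemma comparison_rest_step {L R lam a b u : ℝ} {i : ℕ} (hlam : 0 < lam) {φ : ℝ → ℝ}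
    (hφ : ∀ a b, |φ a - φ b| ≤ L * |a - b|) (hu : |u| ≤ L) {ω ω' x : E} (hx : ‖x‖ ≤ R)
    (hab : b - a = ⟪x, ω⟫_ℝ) (hω0 : i = 0 → ω = 0)
    (hω' : ω' = ((i : ℝ) + 1)⁻¹ • ((i : ℝ) • ω - (u / lam) • x)) :
    φ a - φ b + u * ⟪x, ω⟫_ℝ
      + (comparisonPotential lam ((i : ℝ) + 1) ω' 0 - comparisonPotential lam i ω 0)
      ≤ L ^ 2 * R ^ 2 / lam := by
  have hL : 0 ≤ L := (abs_nonneg u).trans hu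
  have hgap : φ a - φ b + u * ⟪x, ω⟫_ℝ * ((1 - i) / (i + 1))
      ≤ i / (i + 1) * (2 * (L * |⟪x, ω⟫_ℝ|)) := by
    rcases Nat.eq_zero_or_pos i with rfl | hi
    · simp_all [sub_eq_zero]
    · have hφab : φ a - φ b ≤ L * |⟪x, ω⟫_ℝ| := by
        rw [← hab, abs_sub_comm]
        exact (abs_le.1 (hφ a b)).2
      have hub : -(u * ⟪x, ω⟫_ℝ) ≤ L * |⟪x, ω⟫_ℝ| := by
        rw [← neg_mul]
        exact (le_abs_self _).trans (by rw [abs_mul, abs_neg]; gcongr)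
      have hi' : (0 : ℝ) ≤ (i - 1) / (i + 1) :=
        div_nonneg (sub_nonneg.2 (mod_cast hi)) (by positivity)
      calc φ a - φ b + u * ⟪x, ω⟫_ℝ * ((1 - i) / (i + 1))
          = φ a - φ b + (i - 1) / (i + 1) * -(u * ⟪x, ω⟫_ℝ) := by ring
        _ ≤ L * |⟪x, ω⟫_ℝ| + (i - 1) / (i + 1) * (L * |⟪x, ω⟫_ℝ|) := by gcongr
        _ = _ := by field_simp; ring
  have hYoung : 2 * (L * |⟪x, ω⟫_ℝ|) - lam * ‖ω‖ ^ 2 ≤ L ^ 2 * ‖x‖ ^ 2 / lam := by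
    have hinner : L * |⟪x, ω⟫_ℝ| ≤ L * (‖x‖ * ‖ω‖) := by
      gcongr
      exact abs_real_inner_le_norm x ω
    rw [le_div_iff₀ hlam]
    linarith [sq_nonneg (L * ‖x‖ - lam * ‖ω‖), mul_le_mul_of_nonneg_left hinner hlam.le]
  have hid : u * ⟪x, ω⟫_ℝ
      + (comparisonPotential lam ((i : ℝ) + 1) ω' 0 - comparisonPotential lam i ω 0)
      = u * ⟪x, ω⟫_ℝ * ((1 - i) / (i + 1)) - i / (i + 1) * (lam * ‖ω‖ ^ 2)
        + 1 / (i + 1) * (u ^ 2 * ‖x‖ ^ 2 / lam) := by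
    simp only [comparisonPotential, sub_zero, norm_zero, hω', norm_sq_inv_smul_smul_sub_smul]
    field_simp
    ring
  have hu2 : u ^ 2 * ‖x‖ ^ 2 / lam ≤ L ^ 2 * ‖x‖ ^ 2 / lam := by
    have : u ^ 2 ≤ L ^ 2 := sq_le_sq' (abs_le.1 hu).1 (abs_le.1 hu).2
    gcongr
  calc φ a - φ b + u * ⟪x, ω⟫_ℝ
        + (comparisonPotential lam ((i : ℝ) + 1) ω' 0 - comparisonPotential lam i ω 0)
      ≤ i / (i + 1) * (2 * (L * |⟪x, ω⟫_ℝ|) - lam * ‖ω‖ ^ 2)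
        + 1 / (i + 1) * (u ^ 2 * ‖x‖ ^ 2 / lam) := by linarith
    _ ≤ i / (i + 1) * (L ^ 2 * ‖x‖ ^ 2 / lam) + 1 / (i + 1) * (L ^ 2 * ‖x‖ ^ 2 / lam) := by
      gcongr
    _ = L ^ 2 * ‖x‖ ^ 2 / lam := by field_simp
    _ ≤ L ^ 2 * R ^ 2 / lam := by gcongr

lemma comparisonPotential_sub {lam i u m : ℝ} (hlam : lam ≠ 0) (hi : i + 1 ≠ 0)
    {ω ω' v v' x : E} (hω' : ω' = (i + 1)⁻¹ • (i • ω - (u / lam) • x))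
    (hv' : v' = (i + 1)⁻¹ • ((i - 1) • v - (2 * m / lam) • x)) :
    lam / 2 * ‖v‖ ^ 2 + u * ⟪x, ω⟫_ℝ
      + (comparisonPotential lam (i + 1) ω' v' - comparisonPotential lam i ω v)
      = m * ⟪x, ω - v⟫_ℝ - (i - 1) / (i + 1) * ((u - m) * ⟪x, ω - v⟫_ℝ)
        - lam * (i / (i + 1)) * ‖ω - v‖ ^ 2
        + 1 / (i + 1) * (((u - m) ^ 2 + m ^ 2) * ‖x‖ ^ 2 / lam)
        + 1 / (i + 1) ^ 2 * (4 * (m * ⟪x, v⟫_ℝ) - lam * (i - 1) * ‖v‖ ^ 2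
          + 2 * m ^ 2 * ‖x‖ ^ 2 / lam) := by
  obtain ⟨e, rfl⟩ : ∃ e, ω = v + e := ⟨ω - v, by abel⟩
  have hdiff : ω' - v' = (i + 1)⁻¹ • ((1 : ℝ) • (v + i • e) - ((u - 2 * m) / lam) • x) := by
    rw [hω', hv', ← smul_sub]
    congr 1
    module
  simp only [comparisonPotential, hdiff]
  simp only [hω', hv', norm_sq_inv_smul_smul_sub_smul]
  simp only [add_sub_cancel_left, norm_add_sq_real, norm_smul, inner_add_right,
    real_inner_smul_right, mul_pow, Real.norm_eq_abs, sq_abs]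
  field_simp
  ring

lemma four_mul_inner_sub_le {c : ℝ} (hc : 0 < c) (m : ℝ) (x v : E) :
    4 * (m * ⟪x, v⟫_ℝ) - c * ‖v‖ ^ 2 ≤ 4 * m ^ 2 * ‖x‖ ^ 2 / c := by
  have hYoung := neg_norm_sq_div_le_inner_add (c := 2 * c) (by positivity) ((-4 * m) • x) v
  rw [real_inner_smul_left, norm_smul, mul_pow, Real.norm_eq_abs, sq_abs] at hYoung
  have : (-4 * m) ^ 2 * ‖x‖ ^ 2 / (2 * (2 * c)) = 4 * m ^ 2 * ‖x‖ ^ 2 / c := by field_simp; ring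
  linarith

lemma moving_comparator_error_le {R lam i : ℝ} (hlam : 0 < lam) (hi : 1 < i) (m : ℝ) {x : E}
    (v : E) (hx : ‖x‖ ≤ R) :
    1 / (i + 1) ^ 2 * (4 * (m * ⟪x, v⟫_ℝ) - lam * (i - 1) * ‖v‖ ^ 2 + 2 * m ^ 2 * ‖x‖ ^ 2 / lam)
      ≤ 1 / (i + 1) * (2 * m ^ 2 / (i - 1) * R ^ 2 / lam) := by
  have hi0 : 0 < i - 1 := by linarith
  have : 0 < i + 1 := by linarith
  calc 1 / (i + 1) ^ 2
        * (4 * (m * ⟪x, v⟫_ℝ) - lam * (i - 1) * ‖v‖ ^ 2 + 2 * m ^ 2 * ‖x‖ ^ 2 / lam)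
      ≤ 1 / (i + 1) ^ 2
        * (4 * m ^ 2 * ‖x‖ ^ 2 / (lam * (i - 1)) + 2 * m ^ 2 * ‖x‖ ^ 2 / lam) := by
        gcongr
        exact four_mul_inner_sub_le (by positivity) m x v
    _ = 1 / (i + 1) * (2 * m ^ 2 / (i - 1) * ‖x‖ ^ 2 / lam) := by field_simp; ring
    _ ≤ 1 / (i + 1) * (2 * m ^ 2 / (i - 1) * R ^ 2 / lam) := by gcongr

lemma prox_slope_quadratic_le {i : ℝ} (hi : 5 ≤ i) (L s : ℝ) :
    2 * (i + 1) / (i - 1) * (L * s - s ^ 2) + 2 * s ^ 2 / (i - 1) ≤ L ^ 2 := by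
  have hdisc : 0 ≤ L ^ 2 * (i ^ 2 - 4 * i - 1) := mul_nonneg (sq_nonneg L) (by nlinarith)
  have hid : L ^ 2 - (2 * (i + 1) / (i - 1) * (L * s - s ^ 2) + 2 * s ^ 2 / (i - 1))
      = ((2 * i * s - (i + 1) * L) ^ 2 + L ^ 2 * (i ^ 2 - 4 * i - 1)) / (2 * i * (i - 1)) := by
    have : i - 1 ≠ 0 := by linarith
    field_simp
    ring
  have : 0 < i - 1 := by linarith
  rw [← sub_nonneg, hid]
  positivity

/-- The Moreau parameter used by the comparator at step `i`. -/
def proxParam (R lam i : ℝ) : ℝ := 2 * R ^ 2 / (lam * (i - 1))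

lemma comparison_prox_step {L R lam i a b u m : ℝ} (hlam : 0 < lam) (hi : 5 ≤ i) {φ : ℝ → ℝ}
    (hφ : ∀ a b, |φ a - φ b| ≤ L * |a - b|) (hu : IsSubgradAt φ u b)
    (hm : IsProxSlope φ (proxParam R lam i) m a) {ω ω' v v' x : E} (hx : ‖x‖ ≤ R)
    (hab : b - a = ⟪x, ω - v⟫_ℝ) (hω' : ω' = (i + 1)⁻¹ • (i • ω - (u / lam) • x))
    (hv' : v' = (i + 1)⁻¹ • ((i - 1) • v - (2 * m / lam) • x)) :
    φ a + lam / 2 * ‖v‖ ^ 2 - φ b + u * ⟪x, ω⟫_ℝ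
      + (comparisonPotential lam (i + 1) ω' v' - comparisonPotential lam i ω v)
      ≤ L ^ 2 * R ^ 2 / lam * (2 / (i + 1)) := by
  have hi0 : 0 < i - 1 := by linarith
  have hi1 : 0 < i + 1 := by linarith
  have hX : ‖x‖ ^ 2 ≤ R ^ 2 := by gcongr
  have hu2 : u ^ 2 ≤ L ^ 2 := sq_le_sq' (abs_le.1 (hu.abs_le hφ)).1 (abs_le.1 (hu.abs_le hφ)).2
  have hprox := hm.sub_add_mul_sub_le hφ (τ := proxParam R lam i) (θ := (i - 1) / (i + 1))
    (by rw [proxParam]; positivity) (by positivity) hu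
  have hdist : 0 ≤ lam * (i / (i + 1)) * ‖ω - v‖ ^ 2 := by positivity
  have hYoung := moving_comparator_error_le hlam (by linarith : 1 < i) m v hx
  have hcollect : proxParam R lam i * (L * |m| - m ^ 2)
        + (i - 1) / (i + 1) * (proxParam R lam i * ((u - m) * m))
        + 1 / (i + 1) * (((u - m) ^ 2 + m ^ 2) * R ^ 2 / lam)
        + 1 / (i + 1) * (2 * m ^ 2 / (i - 1) * R ^ 2 / lam)
      = R ^ 2 / lam / (i + 1) * (u ^ 2
        + (2 * (i + 1) / (i - 1) * (L * |m| - |m| ^ 2) + 2 * |m| ^ 2 / (i - 1))) := by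
    rw [proxParam, sq_abs]
    field_simp
    ring
  calc φ a + lam / 2 * ‖v‖ ^ 2 - φ b + u * ⟪x, ω⟫_ℝ
        + (comparisonPotential lam (i + 1) ω' v' - comparisonPotential lam i ω v)
      ≤ proxParam R lam i * (L * |m| - m ^ 2)
        + (i - 1) / (i + 1) * (proxParam R lam i * ((u - m) * m))
        + 1 / (i + 1) * (((u - m) ^ 2 + m ^ 2) * ‖x‖ ^ 2 / lam)
        + 1 / (i + 1) * (2 * m ^ 2 / (i - 1) * R ^ 2 / lam) := by
        rw [hab] at hprox
        linarith [comparisonPotential_sub hlam.ne' hi1.ne' hω' hv']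
    _ ≤ R ^ 2 / lam / (i + 1) * (L ^ 2 + L ^ 2) := by
      refine le_trans (by gcongr) (hcollect.trans_le ?_)
      gcongr
      exact prox_slope_quadratic_le hi L |m|
    _ = L ^ 2 * R ^ 2 / lam * (2 / (i + 1)) := by ring

end Comparison

section BiasedSGD

variable {d n : ℕ} {ℓ : ℝ → ℝ → ℝ} {L R lam : ℝ} {S : Fin n → Pt d} {h : Vec d} {w : ℕ → Vec d}
  {u : Fin n → ℝ}

/-- `w` and `u` are the iterates and the subgradients of a run of Algorithm 1 with bias `h` on
the dataset `S`. As in the paper, the iterates are numbered from one. -/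
structure IsBiasedSGD (ℓ : ℝ → ℝ → ℝ) (lam : ℝ) (S : Fin n → Pt d) (h : Vec d) (w : ℕ → Vec d)
    (u : Fin n → ℝ) : Prop where
  init : w 1 = h
  isSubgradAt (k : Fin n) : IsSubgradAt (fun a => ℓ a (S k).2) (u k) ⟪(S k).1, w (k.1 + 1)⟫_ℝ
  step (k : Fin n) : w (k.1 + 2) = w (k.1 + 1) - (((k.1 + 1 : ℕ) : ℝ) * lam)⁻¹ •
    (u k • (S k).1 + lam • (w (k.1 + 1) - h))

/-- The approximate gradient at `h` of the meta-objective, read off the output `w` of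
Algorithm 1. -/
def metaGradient (lam : ℝ) (h w : Vec d) : Vec d := (-lam) • (w - h)

/-- The data point `p` satisfies the standing assumptions: its input has norm at most `R` and its
loss is `L`-Lipschitz. -/
def IsGoodPt (ℓ : ℝ → ℝ → ℝ) (L R : ℝ) (p : Pt d) : Prop :=
  ‖p.1‖ ≤ R ∧ ∀ a b, |ℓ a p.2 - ℓ b p.2| ≤ L * |a - b|

/-- `m i c y` is the slope which drives the comparator in step `i`, at the prediction `c` and the
label `y`. The first five steps need none. -/
def IsComparatorSlope (ℓ : ℝ → ℝ → ℝ) (R lam : ℝ) (m : ℕ → ℝ → ℝ → ℝ) : Prop :=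
  ∀ i : ℕ, 5 ≤ i → ∀ c y, IsProxSlope (fun a => ℓ a y) (proxParam R lam i) (m i c y) c

/-- The displacements of the comparator: at rest for five steps, then driven by the slopes
`m`. The position before step `i` depends on the first `i` data points only. -/
def proxPath (lam : ℝ) (m : ℕ → ℝ → ℝ → ℝ) (h : Vec d) (S : Fin n → Pt d) : ℕ → Vec d
  | 0 => 0
  | i + 1 =>
    if hi : 5 ≤ i ∧ i < n then
      ((i : ℝ) + 1)⁻¹ • (((i : ℝ) - 1) • proxPath lam m h S i
        - (2 * m i ⟪(S ⟨i, hi.2⟩).1, h + proxPath lam m h S i⟫_ℝ (S ⟨i, hi.2⟩).2 / lam) •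
          (S ⟨i, hi.2⟩).1)
    else 0

lemma proxPath_eq_zero (lam : ℝ) (m : ℕ → ℝ → ℝ → ℝ) (h : Vec d) (S : Fin n → Pt d) {i : ℕ}
    (hi : i ≤ 5) : proxPath lam m h S i = 0 := by
  cases i with
  | zero => rfl
  | succ i => rw [proxPath, dif_neg (by lia)]

lemma proxPath_succ (lam : ℝ) (m : ℕ → ℝ → ℝ → ℝ) (h : Vec d) (S : Fin n → Pt d) {k : Fin n}
    (hk : 5 ≤ k.1) :
    proxPath lam m h S (k.1 + 1) = ((k : ℝ) + 1)⁻¹ • (((k : ℝ) - 1) • proxPath lam m h S k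
      - (2 * m k ⟪(S k).1, h + proxPath lam m h S k⟫_ℝ (S k).2 / lam) • (S k).1) := by
  rw [proxPath, dif_pos ⟨hk, k.2⟩]

/-- The regularised loss of the comparator on the data point of step `k`. -/
def comparatorLoss (ℓ : ℝ → ℝ → ℝ) (lam : ℝ) (m : ℕ → ℝ → ℝ → ℝ) (h : Vec d) (S : Fin n → Pt d)
    (k : Fin n) : ℝ :=
  ℓ ⟪(S k).1, h + proxPath lam m h S k⟫_ℝ (S k).2 + lam / 2 * ‖proxPath lam m h S k‖ ^ 2

namespace IsBiasedSGD

lemma displacement_succ (hw : IsBiasedSGD ℓ lam S h w u) (hlam : lam ≠ 0) (k : Fin n) :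
    w (k.1 + 2) - h = ((k : ℝ) + 1)⁻¹ •
      ((k : ℝ) • (w (k.1 + 1) - h) - (u k / lam) • (S k).1) := by
  have hk : (k : ℝ) + 1 ≠ 0 := by positivity
  rw [hw.step k]
  push_cast
  match_scalars <;> field_simp <;> ring

lemma metaGradient_eq (hw : IsBiasedSGD ℓ lam S h w u) (hlam : lam ≠ 0) (hn : n ≠ 0) :
    metaGradient lam h (w (n + 1)) = (n : ℝ)⁻¹ • ∑ k, u k • (S k).1 := by
  have hstep (k : Fin n) : u k • (S k).1 = ((k + 1 : ℕ) : ℝ) • metaGradient lam h (w (k.1 + 2))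
      - (k : ℝ) • metaGradient lam h (w (k.1 + 1)) := by
    have hk : (k : ℝ) + 1 ≠ 0 := by positivity
    rw [metaGradient, metaGradient, hw.displacement_succ hlam k]
    push_cast
    match_scalars <;> field_simp <;> ring
  rw [eq_inv_smul_iff₀ (Nat.cast_ne_zero.2 hn)]
  simp only [hstep]
  rw [Fin.sum_univ_eq_sum_range (fun i => ((i + 1 : ℕ) : ℝ) • metaGradient lam h (w (i + 2))
    - (i : ℝ) • metaGradient lam h (w (i + 1))) n,
    Finset.sum_range_sub (fun i => (i : ℝ) • metaGradient lam h (w (i + 1)))]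
  simp

lemma norm_metaGradient_le (hw : IsBiasedSGD ℓ lam S h w u) (hlam : lam ≠ 0) (hn : n ≠ 0)
    (hS : ∀ k, IsGoodPt ℓ L R (S k)) : ‖metaGradient lam h (w (n + 1))‖ ≤ L * R := by
  have hterm : ∀ k ∈ Finset.univ, ‖u k • (S k).1‖ ≤ L * R := fun k _ => by
    have hu := (hw.isSubgradAt k).abs_le (hS k).2
    rw [norm_smul, Real.norm_eq_abs]
    exact mul_le_mul hu (hS k).1 (norm_nonneg _) ((abs_nonneg _).trans hu)
  rw [hw.metaGradient_eq hlam hn, norm_smul, norm_inv, Real.norm_natCast,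
    inv_mul_le_iff₀ (by positivity)]
  simpa using norm_sum_le_of_le _ hterm

/-- Weak duality: the sum of the terms without `h'` is the dual value at the subgradients of SGD. -/
lemma linearization_le_regRisk (hw : IsBiasedSGD ℓ lam S h w u) (hlam : 0 < lam) (hn : n ≠ 0)
    (h' z : Vec d) :
    (n : ℝ)⁻¹ * ∑ k : Fin n, (ℓ ⟪(S k).1, w (k.1 + 1)⟫_ℝ (S k).2
        - u k * ⟪(S k).1, w (k.1 + 1) - h⟫_ℝ)
      + ⟪metaGradient lam h (w (n + 1)), h' - h⟫_ℝ - lam / 2 * ‖w (n + 1) - h‖ ^ 2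
      ≤ regRisk ℓ lam S h' z := by
  have hlin : (n : ℝ)⁻¹ * ∑ k : Fin n, (ℓ ⟪(S k).1, w (k.1 + 1)⟫_ℝ (S k).2
        - u k * ⟪(S k).1, w (k.1 + 1) - h⟫_ℝ) + ⟪metaGradient lam h (w (n + 1)), z - h⟫_ℝ
      ≤ empRisk ℓ S z := by
    rw [hw.metaGradient_eq hlam.ne' hn, real_inner_smul_left, sum_inner, ← mul_add,
      ← Finset.sum_add_distrib, empRisk]
    gcongr with k
    have := hw.isSubgradAt k ⟪(S k).1, z⟫_ℝ
    simp only [real_inner_smul_left, inner_sub_right] at this ⊢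
    linarith
  have hYoung := neg_norm_sq_div_le_inner_add hlam (metaGradient lam h (w (n + 1))) (z - h')
  have hnorm : ‖metaGradient lam h (w (n + 1))‖ ^ 2 / (2 * lam)
      = lam / 2 * ‖w (n + 1) - h‖ ^ 2 := by
    rw [metaGradient, norm_smul, mul_pow, Real.norm_eq_abs, sq_abs]
    field_simp
  have hsplit : ⟪metaGradient lam h (w (n + 1)), z - h⟫_ℝ
      = ⟪metaGradient lam h (w (n + 1)), z - h'⟫_ℝ
        + ⟪metaGradient lam h (w (n + 1)), h' - h⟫_ℝ := by
    rw [← inner_add_right, sub_add_sub_cancel]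
  rw [regRisk]
  linarith

lemma comparison_step (hw : IsBiasedSGD ℓ lam S h w u) (hlam : 0 < lam)
    (hS : ∀ k, IsGoodPt ℓ L R (S k)) {m : ℕ → ℝ → ℝ → ℝ} (hm : IsComparatorSlope ℓ R lam m)
    (k : Fin n) :
    comparatorLoss ℓ lam m h S k
        - (ℓ ⟪(S k).1, w (k.1 + 1)⟫_ℝ (S k).2 - u k * ⟪(S k).1, w (k.1 + 1) - h⟫_ℝ)
      + (comparisonPotential lam (k + 1 : ℕ) (w (k.1 + 2) - h) (proxPath lam m h S (k.1 + 1))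
        - comparisonPotential lam k (w (k.1 + 1) - h) (proxPath lam m h S k))
      ≤ L ^ 2 * R ^ 2 / lam * stepBudget k := by
  rw [comparatorLoss]
  have hgap : ⟪(S k).1, w (k.1 + 1)⟫_ℝ - ⟪(S k).1, h + proxPath lam m h S k⟫_ℝ
      = ⟪(S k).1, w (k.1 + 1) - h - proxPath lam m h S k⟫_ℝ := by
    rw [← inner_sub_right, sub_add_eq_sub_sub]
  have hω := hw.displacement_succ hlam.ne' k
  have hu := hw.isSubgradAt k
  rcases lt_or_ge k.1 5 with hk | hk
  · rw [proxPath_eq_zero lam m h S hk.le, proxPath_eq_zero lam m h S hk, stepBudget, if_pos hk]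
    rw [proxPath_eq_zero lam m h S hk.le, sub_zero] at hgap
    have := comparison_rest_step hlam (hS k).2 (hu.abs_le (hS k).2) (hS k).1 hgap
      (fun hk0 => by rw [hk0, hw.init, sub_self]) hω
    push_cast
    rw [norm_zero]
    linarith
  · have := comparison_prox_step hlam (mod_cast hk : (5 : ℝ) ≤ k) (hS k).2 hu (hm k hk _ _)
      (hS k).1 hgap hω (proxPath_succ lam m h S hk)
    rw [stepBudget, if_neg (by lia)]
    push_cast
    linarith

lemma sum_comparator_sub_le (hw : IsBiasedSGD ℓ lam S h w u) (hlam : 0 < lam) (hn : n ≠ 0)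
    (hS : ∀ k, IsGoodPt ℓ L R (S k)) {m : ℕ → ℝ → ℝ → ℝ} (hm : IsComparatorSlope ℓ R lam m) :
    ∑ k, comparatorLoss ℓ lam m h S k
        - ∑ k : Fin n, (ℓ ⟪(S k).1, w (k.1 + 1)⟫_ℝ (S k).2
          - u k * ⟪(S k).1, w (k.1 + 1) - h⟫_ℝ)
        + n * (lam / 2 * ‖w (n + 1) - h‖ ^ 2)
      ≤ L ^ 2 * R ^ 2 / lam * (2 * (Real.log n + 1)) := by
  let P : ℕ → ℝ := fun i => comparisonPotential lam i (w (i + 1) - h) (proxPath lam m h S i)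
  have htelescope : ∑ k : Fin n, (P (k.1 + 1) - P k) = P n := by
    rw [Fin.sum_univ_eq_sum_range (fun i => P (i + 1) - P i), Finset.sum_range_sub]
    simp [P, comparisonPotential, proxPath]
  have hP : n * (lam / 2 * ‖w (n + 1) - h‖ ^ 2) ≤ P n := by
    have : 0 ≤ lam / 2 * (n * ‖w (n + 1) - h - proxPath lam m h S n‖ ^ 2
      + ‖proxPath lam m h S n‖ ^ 2) := by positivity
    simp only [P, comparisonPotential]
    linarith
  have hsteps := Finset.sum_le_sum fun k (_ : k ∈ Finset.univ) => hw.comparison_step hlam hS hm k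
  rw [Finset.sum_add_distrib, Finset.sum_sub_distrib, htelescope, ← Finset.mul_sum,
    Fin.sum_univ_eq_sum_range stepBudget] at hsteps
  have hbudget : L ^ 2 * R ^ 2 / lam * ∑ i ∈ Finset.range n, stepBudget i
      ≤ L ^ 2 * R ^ 2 / lam * (2 * (Real.log n + 1)) := by
    gcongr
    exact sum_stepBudget_le (Nat.one_le_iff_ne_zero.2 hn)
  linarith

/-- The approximate meta-gradient is a subgradient of the meta-objective up to a logarithmic
error, once the value at `h` is replaced by the regularised losses of the comparator. -/
lemma comparator_le_regRisk (hw : IsBiasedSGD ℓ lam S h w u) (hlam : 0 < lam) (hn : n ≠ 0)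
    (hS : ∀ k, IsGoodPt ℓ L R (S k)) {m : ℕ → ℝ → ℝ → ℝ} (hm : IsComparatorSlope ℓ R lam m)
    (h' z : Vec d) :
    (n : ℝ)⁻¹ * ∑ k, comparatorLoss ℓ lam m h S k
      + ⟪metaGradient lam h (w (n + 1)), h' - h⟫_ℝ
      - 2 * R ^ 2 * L ^ 2 * (Real.log n + 1) / (lam * n)
      ≤ regRisk ℓ lam S h' z := by
  have hn0 : (n : ℝ) ≠ 0 := Nat.cast_ne_zero.2 hn
  have havg := mul_le_mul_of_nonneg_left (hw.sum_comparator_sub_le hlam hn hS hm)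
    (inv_nonneg.2 n.cast_nonneg)
  rw [mul_add, mul_sub, inv_mul_cancel_left₀ hn0,
    show (n : ℝ)⁻¹ * (L ^ 2 * R ^ 2 / lam * (2 * (Real.log n + 1)))
      = 2 * R ^ 2 * L ^ 2 * (Real.log n + 1) / (lam * n) by field_simp] at havg
  linarith [hw.linearization_le_regRisk hlam hn h' z]

end IsBiasedSGD

end BiasedSGD

section Subgradient

lemma IsSubgradAt.mono {f : ℝ → ℝ} {u v a b : ℝ} (hu : IsSubgradAt f u a)
    (hv : IsSubgradAt f v b) (hab : a < b) : u ≤ v := by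
  have hslope : u * (b - a) ≤ v * (b - a) := by linarith [hu b, hv a]
  exact le_of_mul_le_mul_right hslope (sub_pos.2 hab)

lemma convexOn_univ_of_isSubgradAt {f u : ℝ → ℝ} (hu : ∀ a, IsSubgradAt f (u a) a) :
    ConvexOn ℝ Set.univ f := by
  refine ⟨convex_univ, fun a _ b _ α β hα hβ hαβ => ?_⟩
  obtain rfl : β = 1 - α := by linarith
  simp only [smul_eq_mul]
  have ha := mul_le_mul_of_nonneg_left (hu (α * a + (1 - α) * b) a) hα
  have hb := mul_le_mul_of_nonneg_left (hu (α * a + (1 - α) * b) b) hβ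
  linarith

lemma continuous_of_isSubgradAt {f u : ℝ → ℝ} (hu : ∀ a, IsSubgradAt f (u a) a) :
    Continuous f :=
  continuousOn_univ.1 ((convexOn_univ_of_isSubgradAt hu).continuousOn isOpen_univ)

lemma exists_forall_add_sq_div_le {f u : ℝ → ℝ} (hu : ∀ a, IsSubgradAt f (u a) a) {τ : ℝ}
    (hτ : 0 < τ) (c : ℝ) :
    ∃ p, ∀ s, f p + (p - c) ^ 2 / (2 * τ) ≤ f s + (s - c) ^ 2 / (2 * τ) := by
  have hcont : Continuous fun s => f s + (s - c) ^ 2 / (2 * τ) := by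
    have := continuous_of_isSubgradAt hu
    fun_prop
  refine hcont.exists_forall_le' c <| Filter.mem_of_superset
    (isCompact_closedBall c (2 * τ * |u c|)).compl_mem_cocompact fun s hs => ?_
  have hfar : 2 * τ * |u c| < |s - c| := by
    simpa [Metric.mem_closedBall, Real.dist_eq] using hs
  have hquad : |u c| * |s - c| ≤ (s - c) ^ 2 / (2 * τ) := by
    rw [le_div_iff₀ (by positivity), ← sq_abs (s - c)]
    linarith [mul_le_mul_of_nonneg_right hfar.le (abs_nonneg (s - c))]
  have hlin : -(u c * (s - c)) ≤ |u c| * |s - c| := abs_mul (u c) _ ▸ neg_le_abs _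
  have hsub := hu c s
  change f c + (c - c) ^ 2 / (2 * τ) ≤ f s + (s - c) ^ 2 / (2 * τ)
  rw [sub_self, zero_pow two_ne_zero, zero_div]
  linarith

lemma isSubgradAt_of_forall_add_sq_div_le {f : ℝ → ℝ} (hf : ConvexOn ℝ Set.univ f)
    {τ c p : ℝ} (hτ : τ ≠ 0)
    (hp : ∀ s, f p + (p - c) ^ 2 / (2 * τ) ≤ f s + (s - c) ^ 2 / (2 * τ)) :
    IsSubgradAt f ((c - p) / τ) p := by
  intro b
  set A := f b - f p - (c - p) / τ * (b - p) with hA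
  set B := (b - p) ^ 2 / (2 * τ) with hB
  have hsegment : ∀ᶠ t in nhdsWithin 0 (Set.Ioi 0), 0 ≤ A + t * B := by
    filter_upwards [Ioo_mem_nhdsGT zero_lt_one] with t ⟨ht0, ht1⟩
    have hmin := hp ((1 - t) * p + t * b)
    have hconv := hf.2 (Set.mem_univ p) (Set.mem_univ b) (sub_nonneg.2 ht1.le) ht0.le (by ring)
    simp only [smul_eq_mul] at hconv
    have hsq : ((1 - t) * p + t * b - c) ^ 2 / (2 * τ)
        = (p - c) ^ 2 / (2 * τ) + t * (t * B - (c - p) / τ * (b - p)) := by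
      rw [hB]
      field_simp
      ring
    exact nonneg_of_mul_nonneg_right (by linarith [hA] : 0 ≤ t * (A + t * B)) ht0
  have hlim : Filter.Tendsto (fun t => A + t * B) (nhdsWithin 0 (Set.Ioi 0)) (nhds A) := by
    have : Continuous fun t => A + t * B := by fun_prop
    simpa using (this.tendsto 0).mono_left nhdsWithin_le_nhds
  linarith [hA, ge_of_tendsto hlim hsegment]

lemma exists_isProxSlope {f u : ℝ → ℝ} (hu : ∀ a, IsSubgradAt f (u a) a) {τ : ℝ} (hτ : 0 < τ)
    (c : ℝ) : ∃ m, IsProxSlope f τ m c := by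
  obtain ⟨p, hp⟩ := exists_forall_add_sq_div_le hu hτ c
  refine ⟨(c - p) / τ, ?_⟩
  rw [IsProxSlope, mul_div_cancel₀ _ hτ.ne', sub_sub_cancel]
  exact isSubgradAt_of_forall_add_sq_div_le (convexOn_univ_of_isSubgradAt hu) hτ.ne' hp

variable {Y : Type*} [MeasurableSpace Y] {ℓ u : ℝ → Y → ℝ}

lemma IsProxSlope.sub_mul_le_iff {f v : ℝ → ℝ} (hv : ∀ a, IsSubgradAt f (v a) a) {τ m c t : ℝ}
    (hτ : 0 < τ) (hm : IsProxSlope f τ m c) :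
    c - τ * m ≤ t ↔ ∀ r : ℚ, t < r → 0 ≤ v r + (r - c) / τ := by
  have hslope (r : ℝ) : v r + (r - c) / τ = v r - m + (r - (c - τ * m)) / τ := by
    field_simp
    ring
  constructor
  · intro hle r hr
    have hpos : 0 < r - (c - τ * m) := by linarith
    rw [hslope]
    exact add_nonneg (sub_nonneg.2 (hm.mono (hv r) (hle.trans_lt hr))) (by positivity)
  · intro hall
    by_contra! hlt
    obtain ⟨r, htr, hr⟩ := exists_rat_btwn hlt
    have hneg : (r - (c - τ * m)) / τ < 0 := div_neg_of_neg_of_pos (sub_neg.2 hr) hτ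
    linarith [hall r htr, hslope r, (hv r).mono hm hr]

lemma measurable_uncurry_of_isProxSlope (hum : ∀ a, Measurable (u a))
    (hu : ∀ a y, IsSubgradAt (fun s => ℓ s y) (u a y) a) {τ : ℝ} (hτ : 0 < τ) {m : ℝ → Y → ℝ}
    (hm : ∀ c y, IsProxSlope (fun s => ℓ s y) τ (m c y) c) : Measurable (Function.uncurry m) := by
  have hprox : Measurable fun q : ℝ × Y => q.1 - τ * m q.1 q.2 := by
    refine measurable_of_Iic fun t => ?_
    have hcut : (fun q : ℝ × Y => q.1 - τ * m q.1 q.2) ⁻¹' Set.Iic t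
        = ⋂ r : ℚ, {q : ℝ × Y | t < r → 0 ≤ u r q.2 + (r - q.1) / τ} := by
      ext ⟨c, y⟩
      simpa using (hm c y).sub_mul_le_iff (fun a => hu a y) hτ
    rw [hcut]
    refine MeasurableSet.iInter fun r => (MeasurableSet.const _).imp ?_
    have := hum r
    exact measurableSet_le measurable_const (by fun_prop)
  have hm_eq : Function.uncurry m = fun q : ℝ × Y => (q.1 - (q.1 - τ * m q.1 q.2)) / τ := by
    ext ⟨c, y⟩
    simp [hτ.ne']
  rw [hm_eq]
  exact (measurable_fst.sub hprox).div_const τ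

lemma exists_measurable_isProxSlope (hum : ∀ a, Measurable (u a))
    (hu : ∀ a y, IsSubgradAt (fun s => ℓ s y) (u a y) a) {τ : ℝ} (hτ : 0 < τ) :
    ∃ m : ℝ → Y → ℝ, Measurable (Function.uncurry m) ∧
      ∀ c y, IsProxSlope (fun s => ℓ s y) τ (m c y) c := by
  choose m hm using fun c y => exists_isProxSlope (fun a => hu a y) hτ c
  exact ⟨m, measurable_uncurry_of_isProxSlope hum hu hτ hm, hm⟩

lemma abs_sub_sum_subgrad_le {f v : ℝ → ℝ} (hv : ∀ a, IsSubgradAt f (v a) a) (δ : ℝ) (N : ℕ) :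
    |f (N * δ) - f 0 - ∑ i ∈ Finset.range N, δ * v (i * δ)| ≤ |δ * (v (N * δ) - v 0)| := by
  have key : 0 ≤ f (N * δ) - f 0 - ∑ i ∈ Finset.range N, δ * v (i * δ) ∧
      f (N * δ) - f 0 - ∑ i ∈ Finset.range N, δ * v (i * δ) ≤ δ * (v (N * δ) - v 0) := by
    induction N with
    | zero => simp
    | succ N ih =>
      have hright := hv (N * δ) ((N + 1 : ℕ) * δ)
      have hleft := hv ((N + 1 : ℕ) * δ) (N * δ)
      rw [Finset.sum_range_succ]
      push_cast at hright hleft ⊢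
      constructor <;> linarith [ih.1, ih.2]
  rw [abs_of_nonneg key.1]
  exact key.2.trans (le_abs_self _)

/-- The loss shifted to vanish at the prediction `0`. Unlike `ℓ` itself it is measurable as soon
as its subgradients are. -/
def centeredLoss (ℓ : ℝ → Y → ℝ) (a : ℝ) (y : Y) : ℝ := ℓ a y - ℓ 0 y

lemma measurable_centeredLoss (hum : ∀ a, Measurable (u a))
    (hu : ∀ a y, IsSubgradAt (fun s => ℓ s y) (u a y) a) (a : ℝ) :
    Measurable (centeredLoss ℓ a) := by
  let δ : ℕ → ℝ := fun N => a / ((N : ℝ) + 1)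
  have hδ : Filter.Tendsto δ Filter.atTop (nhds 0) :=
    tendsto_const_div_atTop_nhds_zero_nat a |>.comp (Filter.tendsto_add_atTop_nat 1) |>.congr
      fun N => by simp [δ]
  refine measurable_of_tendsto_metrizable
    (f := fun N y => ∑ i ∈ Finset.range (N + 1), δ N * u (i * δ N) y)
    (fun N => Finset.measurable_fun_sum _ fun i _ => (hum _).const_mul _)
    (tendsto_pi_nhds.2 fun y => ?_)
  rw [tendsto_iff_dist_tendsto_zero]
  refine squeeze_zero (fun _ => dist_nonneg) (fun N => ?_)
    (g := fun N => |δ N * (u a y - u 0 y)|) (by simpa using (hδ.mul_const _).abs)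
  have hN : ((N + 1 : ℕ) : ℝ) * δ N = a := by
    simp only [δ]
    push_cast
    field_simp
  have := abs_sub_sum_subgrad_le (fun a => hu a y) (δ N) (N + 1)
  rwa [hN, abs_sub_comm] at this

lemma measurable_uncurry_centeredLoss (hum : ∀ a, Measurable (u a))
    (hu : ∀ a y, IsSubgradAt (fun s => ℓ s y) (u a y) a) :
    Measurable (Function.uncurry (centeredLoss ℓ)) :=
  measurable_uncurry_of_continuous_of_measurable
    (fun y => (continuous_of_isSubgradAt fun a => hu a y).sub continuous_const)
    (measurable_centeredLoss hum hu)

end Subgradient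

section Dataset

/-- The law `μ ^ n` of a dataset of `n` independent points drawn from `μ`. -/
abbrev iidLaw {Z : Type*} [MeasurableSpace Z] (n : ℕ) (μ : Measure Z) : Measure (Fin n → Z) :=
  Measure.pi fun _ => μ

/-- The meta-objective `L_S(h)` of the dataset `S`, the optimal value of the biased regularized
empirical risk as a function of the bias. -/
def metaObjective {d n : ℕ} (ℓ : ℝ → ℝ → ℝ) (lam : ℝ) (S : Fin n → Pt d) (h : Vec d) : ℝ :=
  ⨅ w, regRisk ℓ lam S h w

variable {d n : ℕ} {ℓ : ℝ → ℝ → ℝ} {lam L R : ℝ}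

lemma ae_iidLaw_forall {Z : Type*} [MeasurableSpace Z] {μ : Measure Z} [SigmaFinite μ]
    {P : Z → Prop} (hP : ∀ᵐ z ∂μ, P z) : ∀ᵐ S ∂(iidLaw n μ), ∀ k, P (S k) :=
  ae_all_iff.2 fun _ => Measure.tendsto_eval_ae_ae.eventually hP

lemma IsGoodPt.mul_nonneg {p : Pt d} (hp : IsGoodPt ℓ L R p) : 0 ≤ L * R := by
  have hL : 0 ≤ L := by simpa using (abs_nonneg _).trans (hp.2 1 0)
  exact _root_.mul_nonneg hL ((norm_nonneg _).trans hp.1)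

lemma IsGoodPt.abs_loss_sub_le {p : Pt d} (hp : IsGoodPt ℓ L R p) (z : Vec d) :
    |ℓ ⟪p.1, z⟫_ℝ p.2 - ℓ 0 p.2| ≤ L * R * ‖z‖ := by
  have hL : 0 ≤ L := by simpa using (abs_nonneg _).trans (hp.2 1 0)
  calc |ℓ ⟪p.1, z⟫_ℝ p.2 - ℓ 0 p.2| ≤ L * |⟪p.1, z⟫_ℝ| := by simpa using hp.2 ⟪p.1, z⟫_ℝ 0
    _ ≤ L * (‖p.1‖ * ‖z‖) := by
      gcongr
      exact abs_real_inner_le_norm _ _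
    _ ≤ L * (R * ‖z‖) := by
      gcongr
      exact hp.1
    _ = L * R * ‖z‖ := (mul_assoc _ _ _).symm

lemma continuous_regRisk {S : Fin n → Pt d} (hS : ∀ k, IsGoodPt ℓ L R (S k)) (h : Vec d) :
    Continuous (regRisk ℓ lam S h) := by
  have hloss (k : Fin n) : Continuous fun z : Vec d => ℓ ⟪(S k).1, z⟫_ℝ (S k).2 := by
    have hlip : Continuous fun a => ℓ a (S k).2 := (LipschitzWith.of_dist_le' (hS k).2).continuous
    exact hlip.comp (by fun_prop : Continuous fun z : Vec d => ⟪(S k).1, z⟫_ℝ)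
  exact ((continuous_finsetSum _ fun k _ => hloss k).const_mul _).add (by fun_prop)

section Bounds

variable {S : Fin n → Pt d}

lemma abs_empRisk_sub_le (hn : n ≠ 0) (hS : ∀ k, IsGoodPt ℓ L R (S k)) (z : Vec d) :
    |empRisk ℓ S z - empRisk ℓ S 0| ≤ L * R * ‖z‖ := by
  simp only [empRisk, inner_zero_right]
  rw [← mul_sub, ← Finset.sum_sub_distrib, abs_mul, abs_inv, Nat.abs_cast,
    inv_mul_le_iff₀ (by positivity)]
  refine (Finset.abs_sum_le_sum_abs _ _).trans
    ((Finset.sum_le_sum fun k _ => (hS k).abs_loss_sub_le z).trans_eq ?_)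
  simp

lemma le_regRisk (hn : n ≠ 0) (hlam : 0 < lam) (hS : ∀ k, IsGoodPt ℓ L R (S k)) (h z : Vec d) :
    empRisk ℓ S 0 - (L * R * ‖h‖ + (L * R) ^ 2 / (2 * lam)) ≤ regRisk ℓ lam S h z := by
  have hLR : 0 ≤ L * R := (hS ⟨0, hn.bot_lt⟩).mul_nonneg
  have hemp := (abs_le.1 (abs_empRisk_sub_le hn hS z)).1
  have htri : L * R * ‖z‖ ≤ L * R * (‖h‖ + ‖z - h‖) := by
    gcongr
    exact norm_le_insert' z h
  have hsq : 0 ≤ (L * R - lam * ‖z - h‖) ^ 2 / (2 * lam) := by positivity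
  have hexpand : (L * R - lam * ‖z - h‖) ^ 2 / (2 * lam)
      = (L * R) ^ 2 / (2 * lam) - L * R * ‖z - h‖ + lam / 2 * ‖z - h‖ ^ 2 := by
    field_simp
    ring
  rw [regRisk]
  linarith

lemma bddBelow_range_regRisk (hn : n ≠ 0) (hlam : 0 < lam) (hS : ∀ k, IsGoodPt ℓ L R (S k))
    (h : Vec d) : BddBelow (Set.range (regRisk ℓ lam S h)) :=
  ⟨_, Set.forall_mem_range.2 (le_regRisk hn hlam hS h)⟩

lemma abs_metaObjective_sub_le (hn : n ≠ 0) (hlam : 0 < lam) (hS : ∀ k, IsGoodPt ℓ L R (S k))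
    (h : Vec d) :
    |metaObjective ℓ lam S h - empRisk ℓ S 0| ≤ L * R * ‖h‖ + (L * R) ^ 2 / (2 * lam) := by
  have hlower : empRisk ℓ S 0 - (L * R * ‖h‖ + (L * R) ^ 2 / (2 * lam)) ≤ metaObjective ℓ lam S h :=
    le_ciInf (le_regRisk hn hlam hS h)
  have hupper : metaObjective ℓ lam S h ≤ empRisk ℓ S h :=
    (ciInf_le (bddBelow_range_regRisk hn hlam hS h) h).trans_eq (by simp [regRisk])
  have hemp := (abs_le.1 (abs_empRisk_sub_le hn hS h)).2
  have hpos : 0 ≤ (L * R) ^ 2 / (2 * lam) := by positivity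
  exact abs_le.2 ⟨by linarith, by linarith⟩

end Bounds

lemma measurable_loss_inner (hℓm : Measurable (Function.uncurry ℓ)) (k : Fin n)
    {v : (Fin n → Pt d) → Vec d} (hv : Measurable v) :
    Measurable fun S => ℓ ⟪(S k).1, v S⟫_ℝ (S k).2 := by
  have hpred : Measurable fun S : Fin n → Pt d => (⟪(S k).1, v S⟫_ℝ, (S k).2) := by fun_prop
  exact hℓm.comp hpred

lemma measurable_regRisk (hℓm : Measurable (Function.uncurry ℓ)) (h z : Vec d) :
    Measurable fun S : Fin n → Pt d => regRisk ℓ lam S h z :=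
  ((Finset.measurable_fun_sum _ fun k _ =>
    measurable_loss_inner hℓm k measurable_const).const_mul _).add_const _

variable {μ : Measure (Pt d)} [IsProbabilityMeasure μ]

lemma aemeasurable_metaObjective (hℓm : Measurable (Function.uncurry ℓ)) (hn : n ≠ 0)
    (hlam : 0 < lam) (hgood : ∀ᵐ p ∂μ, IsGoodPt ℓ L R p) (h : Vec d) :
    AEMeasurable (fun S => metaObjective ℓ lam S h) (iidLaw n μ) := by
  obtain ⟨D, hDc, hD⟩ := TopologicalSpace.exists_countable_dense (Vec d)
  have := hDc.to_subtype
  refine ⟨fun S => ⨅ z : D, regRisk ℓ lam S h z, Measurable.iInf fun z =>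
    measurable_regRisk hℓm h z, ?_⟩
  filter_upwards [ae_iidLaw_forall hgood] with S hS
  exact (hD.ciInf (continuous_regRisk hS h) (bddBelow_range_regRisk hn hlam hS h)).symm

lemma integrable_metaObjective (hℓ : ∀ y, ℓ 0 y = 0) (hℓm : Measurable (Function.uncurry ℓ))
    (hn : n ≠ 0) (hlam : 0 < lam) (hgood : ∀ᵐ p ∂μ, IsGoodPt ℓ L R p) (h : Vec d) :
    Integrable (fun S => metaObjective ℓ lam S h) (iidLaw n μ) := by
  refine .of_bound (aemeasurable_metaObjective hℓm hn hlam hgood h).aestronglyMeasurable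
    (L * R * ‖h‖ + (L * R) ^ 2 / (2 * lam)) ?_
  filter_upwards [ae_iidLaw_forall hgood] with S hS
  simpa [empRisk, hℓ] using abs_metaObjective_sub_le hn hlam hS h

lemma integrable_loss_inner (hℓ : ∀ y, ℓ 0 y = 0) (hℓm : Measurable (Function.uncurry ℓ))
    (hgood : ∀ᵐ p ∂μ, IsGoodPt ℓ L R p) (z : Vec d) :
    Integrable (fun p : Pt d => ℓ ⟪p.1, z⟫_ℝ p.2) μ := by
  have hpred : Measurable fun p : Pt d => (⟪p.1, z⟫_ℝ, p.2) := by fun_prop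
  refine .of_bound (hℓm.comp hpred).aestronglyMeasurable (L * R * ‖z‖) ?_
  filter_upwards [hgood] with p hp
  simpa [hℓ] using hp.abs_loss_sub_le z

lemma integrable_loss_inner_eval (hℓ : ∀ y, ℓ 0 y = 0) (hℓm : Measurable (Function.uncurry ℓ))
    (hgood : ∀ᵐ p ∂μ, IsGoodPt ℓ L R p) (k : Fin n) (z : Vec d) :
    Integrable (fun S : Fin n → Pt d => ℓ ⟪(S k).1, z⟫_ℝ (S k).2) (iidLaw n μ) :=
  integrable_comp_eval (μ := fun _ : Fin n => μ) (i := k)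
    (f := fun p : Pt d => ℓ ⟪p.1, z⟫_ℝ p.2) (integrable_loss_inner hℓ hℓm hgood z)

lemma integrable_regRisk (hℓ : ∀ y, ℓ 0 y = 0) (hℓm : Measurable (Function.uncurry ℓ))
    (hgood : ∀ᵐ p ∂μ, IsGoodPt ℓ L R p) (h z : Vec d) :
    Integrable (fun S => regRisk ℓ lam S h z) (iidLaw n μ) :=
  ((integrable_finsetSum _ fun k _ =>
    integrable_loss_inner_eval hℓ hℓm hgood k z).const_mul _).add (integrable_const _)

lemma integral_regRisk (hℓ : ∀ y, ℓ 0 y = 0) (hℓm : Measurable (Function.uncurry ℓ))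
    (hn : n ≠ 0) (hgood : ∀ᵐ p ∂μ, IsGoodPt ℓ L R p) (h z : Vec d) :
    ∫ S, regRisk ℓ lam S h z ∂(iidLaw n μ) = trueRisk ℓ μ z + lam / 2 * ‖z - h‖ ^ 2 := by
  have hsample := fun k : Fin n => integrable_loss_inner_eval hℓ hℓm hgood k z
  have heval (k : Fin n) :
      ∫ S, ℓ ⟪(S k).1, z⟫_ℝ (S k).2 ∂(iidLaw n μ) = ∫ p, ℓ ⟪p.1, z⟫_ℝ p.2 ∂μ :=
    integral_comp_eval (μ := fun _ : Fin n => μ) (i := k) (f := fun p : Pt d => ℓ ⟪p.1, z⟫_ℝ p.2)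
      (integrable_loss_inner hℓ hℓm hgood z).aestronglyMeasurable
  simp only [regRisk, empRisk, trueRisk]
  rw [integral_add ((integrable_finsetSum _ fun k _ => hsample k).const_mul _)
    (integrable_const _), integral_const_mul, integral_finsetSum _ fun k _ => hsample k]
  simp [heval, hn]

lemma integral_metaObjective_le (hℓ : ∀ y, ℓ 0 y = 0) (hℓm : Measurable (Function.uncurry ℓ))
    (hn : n ≠ 0) (hlam : 0 < lam) (hgood : ∀ᵐ p ∂μ, IsGoodPt ℓ L R p) (h z : Vec d) :
    ∫ S, metaObjective ℓ lam S h ∂(iidLaw n μ) ≤ trueRisk ℓ μ z + lam / 2 * ‖z - h‖ ^ 2 := by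
  rw [← integral_regRisk hℓ hℓm hn hgood]
  refine integral_mono_ae (integrable_metaObjective hℓ hℓm hn hlam hgood h)
    (integrable_regRisk hℓ hℓm hgood h z) ?_
  filter_upwards [ae_iidLaw_forall hgood] with S hS
  exact ciInf_le (bddBelow_range_regRisk hn hlam hS h) z

lemma le_integral_of_update_invariant {Z V : Type*} [MeasurableSpace Z] {μ : Measure Z}
    [IsProbabilityMeasure μ] (f : Z → V → ℝ) (v : (Fin n → Z) → V) (k : Fin n)
    (hv : ∀ S z, v (Function.update S k z) = v S) {c : ℝ} (hc : ∀ a, c ≤ ∫ z, f z a ∂μ)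
    (hint : Integrable (fun S => f (S k) (v S)) (iidLaw n μ)) :
    c ≤ ∫ S, f (S k) (v S) ∂(iidLaw n μ) := by
  obtain _ | n := n
  · exact k.elim0
  have hsplit := (measurePreserving_piFinSuccAbove (fun _ : Fin (n + 1) => μ) k).symm
  have hint' := hsplit.integrable_comp_of_integrable hint
  obtain ⟨z₀⟩ : Nonempty Z := nonempty_of_isProbabilityMeasure μ
  have hslice (S : Fin n → Z) :
      c ≤ ∫ z, f ((k.insertNth z S : Fin (n + 1) → Z) k) (v (k.insertNth z S)) ∂μ := by
    refine (hc (v (k.insertNth z₀ S))).trans_eq (integral_congr_ae (ae_of_all _ fun z => ?_))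
    simp only [Fin.insertNth_apply_same, ← hv (k.insertNth z₀ S) z, Fin.update_insertNth]
  calc c = ∫ _, c ∂(iidLaw n μ) := by simp
    _ ≤ ∫ S, ∫ z, f ((k.insertNth z S : Fin (n + 1) → Z) k) (v (k.insertNth z S)) ∂μ
        ∂(iidLaw n μ) :=
      integral_mono (integrable_const _) hint'.integral_prod_right hslice
    _ = ∫ S, f (S k) (v S) ∂(iidLaw (n + 1) μ) :=
      (integral_prod_symm _ hint').symm.trans (hsplit.integral_comp' fun S => f (S k) (v S))

end Dataset

section Task

variable {d n : ℕ} {ℓ : ℝ → ℝ → ℝ} {lam L R : ℝ} {m : ℕ → ℝ → ℝ → ℝ} {h : Vec d}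

lemma measurable_proxPath (hm : ∀ i, Measurable (Function.uncurry (m i))) (i : ℕ) :
    Measurable fun S : Fin n → Pt d => proxPath lam m h S i := by
  induction i with
  | zero => exact measurable_const
  | succ i ih =>
    by_cases hi : 5 ≤ i ∧ i < n
    · have := measurable_loss_inner (hm i) ⟨i, hi.2⟩ (ih.const_add h)
      simp only [proxPath, dif_pos hi]
      fun_prop
    · simp only [proxPath, dif_neg hi]
      exact measurable_const

lemma proxPath_update (S : Fin n → Pt d) (k : Fin n) (p : Pt d) {i : ℕ} (hi : i ≤ k) :
    proxPath lam m h (Function.update S k p) i = proxPath lam m h S i := by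
  induction i with
  | zero => rfl
  | succ i ih =>
    have hne (hin : i < n) : (⟨i, hin⟩ : Fin n) ≠ k := Fin.ne_of_lt hi
    simp only [proxPath, ih (Nat.le_of_succ_le hi), Function.update_of_ne (hne _)]

lemma norm_proxPath_le (hn : n ≠ 0) (hlam : 0 < lam) {S : Fin n → Pt d}
    (hS : ∀ k, IsGoodPt ℓ L R (S k)) (hm : IsComparatorSlope ℓ R lam m) (i : ℕ) :
    ‖proxPath lam m h S i‖ ≤ L * R / lam := by
  have hpos : 0 ≤ L * R / lam := div_nonneg (hS ⟨0, hn.bot_lt⟩).mul_nonneg hlam.le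
  induction i with
  | zero => simpa [proxPath] using hpos
  | succ i ih =>
    by_cases hi : 5 ≤ i ∧ i < n
    · let k : Fin n := ⟨i, hi.2⟩
      let s := m i ⟪(S k).1, h + proxPath lam m h S i⟫_ℝ (S k).2
      have hi1 : 0 ≤ (i : ℝ) - 1 := by
        rw [sub_nonneg, Nat.one_le_cast]
        lia
      have hs : |s| ≤ L := (hm i hi.1 _ _).abs_le (hS k).2
      have hforce : ‖(2 * s / lam) • (S k).1‖ ≤ 2 * L / lam * R := by
        rw [norm_smul, Real.norm_eq_abs, abs_div, abs_mul, abs_two, abs_of_pos hlam]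
        have hL : 0 ≤ L := (abs_nonneg s).trans hs
        have hx := (hS k).1
        gcongr
      rw [proxPath_succ lam m h S (k := k) hi.1, norm_smul, norm_inv,
        Real.norm_of_nonneg (by positivity), inv_mul_le_iff₀ (by positivity)]
      calc ‖((i : ℝ) - 1) • proxPath lam m h S i - (2 * s / lam) • (S k).1‖
          ≤ ((i : ℝ) - 1) * ‖proxPath lam m h S i‖ + 2 * L / lam * R := by
            refine (norm_sub_le _ _).trans (add_le_add ?_ hforce)
            rw [norm_smul, Real.norm_of_nonneg hi1]
        _ ≤ ((i : ℝ) - 1) * (L * R / lam) + 2 * L / lam * R := by gcongr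
        _ = ((i : ℝ) + 1) * (L * R / lam) := by ring
    · simpa [proxPath, hi] using hpos

lemma abs_comparatorLoss_le (hℓ : ∀ y, ℓ 0 y = 0) (hlam : 0 < lam) {S : Fin n → Pt d}
    (hS : ∀ k, IsGoodPt ℓ L R (S k)) (hm : IsComparatorSlope ℓ R lam m) (k : Fin n) :
    |comparatorLoss ℓ lam m h S k|
      ≤ L * R * (‖h‖ + L * R / lam) + lam / 2 * (L * R / lam) ^ 2 := by
  have hLR := (hS k).mul_nonneg
  have hpath := norm_proxPath_le (h := h) k.pos.ne' hlam hS hm k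
  refine (abs_add_le _ _).trans (add_le_add ?_ ?_)
  · calc |ℓ ⟪(S k).1, h + proxPath lam m h S k⟫_ℝ (S k).2|
        ≤ L * R * ‖h + proxPath lam m h S k‖ := by simpa [hℓ] using (hS k).abs_loss_sub_le _
      _ ≤ L * R * (‖h‖ + L * R / lam) := by
        gcongr
        exact (norm_add_le _ _).trans (by gcongr)
  · rw [abs_of_nonneg (by positivity)]
    gcongr

lemma exists_measurable_isComparatorSlope {u : ℝ → ℝ → ℝ} (hum : ∀ a, Measurable (u a))
    (hu : ∀ a y, IsSubgradAt (fun s => ℓ s y) (u a y) a) (hR : 0 < R) (hlam : 0 < lam) :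
    ∃ m : ℕ → ℝ → ℝ → ℝ, (∀ i, Measurable (Function.uncurry (m i))) ∧
      IsComparatorSlope ℓ R lam m := by
  have hslope (i : ℕ) : ∃ s : ℝ → ℝ → ℝ, Measurable (Function.uncurry s) ∧
      (5 ≤ i → ∀ c y, IsProxSlope (fun a => ℓ a y) (proxParam R lam i) (s c y) c) := by
    by_cases hi : 5 ≤ i
    · have hi1 : 0 < (i : ℝ) - 1 := by
        rw [sub_pos, Nat.one_lt_cast]
        lia
      obtain ⟨s, hsm, hs⟩ := exists_measurable_isProxSlope (τ := proxParam R lam i) hum hu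
        (by unfold proxParam; positivity)
      exact ⟨s, hsm, fun _ => hs⟩
    · exact ⟨fun _ _ => 0, measurable_const, fun h => absurd h hi⟩
  choose m hmm hm using hslope
  exact ⟨m, hmm, hm⟩

variable {w : (Fin n → Pt d) → ℕ → Vec d} {u : (Fin n → Pt d) → Fin n → ℝ}

lemma measurable_biasedSGD (hu : ∀ k, Measurable fun S => u S k)
    (hw : ∀ S, IsBiasedSGD ℓ lam S h (w S) (u S)) {i : ℕ} (hi : i ≤ n) :
    Measurable fun S => w S (i + 1) := by
  induction i with
  | zero => simp only [zero_add, (hw _).init, measurable_const]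
  | succ i ih =>
    have ih := ih (Nat.le_of_succ_le hi)
    have huk := hu ⟨i, hi⟩
    rw [funext fun S => (hw S).step ⟨i, hi⟩]
    fun_prop

variable {μ : Measure (Pt d)} [IsProbabilityMeasure μ]

lemma integrable_inner_metaGradient (hn : n ≠ 0) (hlam : lam ≠ 0)
    (hgood : ∀ᵐ p ∂μ, IsGoodPt ℓ L R p) (hu : ∀ k, Measurable fun S => u S k)
    (hw : ∀ S, IsBiasedSGD ℓ lam S h (w S) (u S)) (v : Vec d) :
    Integrable (fun S => ⟪metaGradient lam h (w S (n + 1)), v⟫_ℝ) (iidLaw n μ) := by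
  have hmeas := measurable_biasedSGD hu hw le_rfl
  refine .of_bound (Measurable.aestronglyMeasurable (by unfold metaGradient; fun_prop))
    (L * R * ‖v‖) ?_
  filter_upwards [ae_iidLaw_forall hgood] with S hS
  refine (norm_inner_le_norm _ _).trans ?_
  gcongr
  exact (hw S).norm_metaGradient_le hlam hn hS

section Comparator

variable (hℓ : ∀ y, ℓ 0 y = 0) (hℓm : Measurable (Function.uncurry ℓ)) (hlam : 0 < lam)
  (hgood : ∀ᵐ p ∂μ, IsGoodPt ℓ L R p) (hmm : ∀ i, Measurable (Function.uncurry (m i)))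
  (hm : IsComparatorSlope ℓ R lam m)

include hℓ hℓm hlam hgood hmm hm

lemma integrable_comparatorLoss (k : Fin n) :
    Integrable (fun S => comparatorLoss ℓ lam m h S k) (iidLaw n μ) := by
  have hpath : Measurable fun S : Fin n → Pt d => proxPath lam m h S k := measurable_proxPath hmm k
  refine .of_bound ((measurable_loss_inner hℓm k (hpath.const_add h)).add
    ((hpath.norm.pow_const 2).const_mul _)).aestronglyMeasurable
    (L * R * (‖h‖ + L * R / lam) + lam / 2 * (L * R / lam) ^ 2) ?_
  filter_upwards [ae_iidLaw_forall hgood] with S hS using abs_comparatorLoss_le hℓ hlam hS hm k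

/-- Before step `k` the comparator has not seen the `k`-th data point, so that its expected loss
there is a regularised true risk. -/
lemma integral_metaObjective_le_comparatorLoss (k : Fin n) :
    ∫ S, metaObjective ℓ lam S h ∂(iidLaw n μ)
      ≤ ∫ S, comparatorLoss ℓ lam m h S k ∂(iidLaw n μ) := by
  refine le_integral_of_update_invariant
    (fun (p : Pt d) (v : Vec d) => ℓ ⟪p.1, h + v⟫_ℝ p.2 + lam / 2 * ‖v‖ ^ 2)
    (fun S => proxPath lam m h S k) k (fun S p => proxPath_update S k p le_rfl)
    (fun v => (integral_metaObjective_le hℓ hℓm k.pos.ne' hlam hgood h (h + v)).trans_eq ?_)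
    (integrable_comparatorLoss hℓ hℓm hlam hgood hmm hm k)
  rw [integral_add (integrable_loss_inner hℓ hℓm hgood _) (integrable_const _)]
  simp [trueRisk]

lemma integral_metaObjective_sub_le_of_isComparatorSlope (hn : n ≠ 0)
    (hu : ∀ k, Measurable fun S => u S k) (hw : ∀ S, IsBiasedSGD ℓ lam S h (w S) (u S))
    (h' : Vec d) :
    ∫ S, metaObjective ℓ lam S h ∂(iidLaw n μ) - ∫ S, metaObjective ℓ lam S h' ∂(iidLaw n μ)
      ≤ ∫ S, ⟪metaGradient lam h (w S (n + 1)), h - h'⟫_ℝ ∂(iidLaw n μ)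
        + 2 * R ^ 2 * L ^ 2 * (Real.log n + 1) / (lam * n) := by
  let ε := 2 * R ^ 2 * L ^ 2 * (Real.log n + 1) / (lam * n)
  have hloss := fun k : Fin n => integrable_comparatorLoss (h := h) hℓ hℓm hlam hgood hmm hm k
  have hinner := integrable_inner_metaGradient hn hlam.ne' hgood hu hw (h' - h)
  have hmean : Integrable (fun S => (n : ℝ)⁻¹ * ∑ k, comparatorLoss ℓ lam m h S k) (iidLaw n μ) :=
    (integrable_finsetSum _ fun k _ => hloss k).const_mul _
  have hadd : Integrable (fun S => (n : ℝ)⁻¹ * ∑ k, comparatorLoss ℓ lam m h S k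
      + ⟪metaGradient lam h (w S (n + 1)), h' - h⟫_ℝ) (iidLaw n μ) := hmean.add hinner
  have hcomp : ∫ S, metaObjective ℓ lam S h ∂(iidLaw n μ)
      ≤ ∫ S, (n : ℝ)⁻¹ * ∑ k, comparatorLoss ℓ lam m h S k ∂(iidLaw n μ) := by
    rw [integral_const_mul, integral_finsetSum _ fun k _ => hloss k,
      le_inv_mul_iff₀ (by positivity)]
    simpa using Finset.sum_le_sum fun k (_ : k ∈ Finset.univ) =>
      integral_metaObjective_le_comparatorLoss (h := h) hℓ hℓm hlam hgood hmm hm k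
  have hpath : ∫ S, ((n : ℝ)⁻¹ * ∑ k, comparatorLoss ℓ lam m h S k
        + ⟪metaGradient lam h (w S (n + 1)), h' - h⟫_ℝ - ε) ∂(iidLaw n μ)
      ≤ ∫ S, metaObjective ℓ lam S h' ∂(iidLaw n μ) := by
    refine integral_mono_ae (hadd.sub (integrable_const _))
      (integrable_metaObjective hℓ hℓm hn hlam hgood h') ?_
    filter_upwards [ae_iidLaw_forall hgood] with S hS
    exact le_ciInf fun z => (hw S).comparator_le_regRisk hlam hn hS hm h' z
  have hflip : ∫ S, ⟪metaGradient lam h (w S (n + 1)), h' - h⟫_ℝ ∂(iidLaw n μ)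
      = -∫ S, ⟪metaGradient lam h (w S (n + 1)), h - h'⟫_ℝ ∂(iidLaw n μ) := by
    simp only [← neg_sub h h', inner_neg_right, integral_neg]
  rw [integral_sub hadd (integrable_const _), integral_add hmean hinner, hflip] at hpath
  simp only [integral_const, probReal_univ, one_smul] at hpath
  linarith

end Comparator

end Task

section Meta

variable {d n : ℕ} {ℓ : ℝ → ℝ → ℝ} {lam L R : ℝ}

lemma centeredLoss_zero_left (y : ℝ) : centeredLoss ℓ 0 y = 0 := sub_self _

lemma IsSubgradAt.centeredLoss {u a y : ℝ} (hu : IsSubgradAt (fun s => ℓ s y) u a) :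
    IsSubgradAt (fun s => centeredLoss ℓ s y) u a := fun b => by
  simpa only [_root_.centeredLoss, sub_add_eq_add_sub] using sub_le_sub_right (hu b) (ℓ 0 y)

lemma IsGoodPt.centeredLoss {p : Pt d} (hp : IsGoodPt ℓ L R p) :
    IsGoodPt (centeredLoss ℓ) L R p :=
  ⟨hp.1, fun a b => by simpa only [_root_.centeredLoss, sub_sub_sub_cancel_right] using hp.2 a b⟩

lemma IsBiasedSGD.centeredLoss {S : Fin n → Pt d} {h : Vec d} {w : ℕ → Vec d} {u : Fin n → ℝ}
    (hw : IsBiasedSGD ℓ lam S h w u) : IsBiasedSGD (centeredLoss ℓ) lam S h w u :=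
  ⟨hw.init, fun k => (hw.isSubgradAt k).centeredLoss, hw.step⟩

lemma metaObjective_eq_add {S : Fin n → Pt d} (hn : n ≠ 0) (hlam : 0 < lam)
    (hS : ∀ k, IsGoodPt ℓ L R (S k)) (h : Vec d) :
    metaObjective ℓ lam S h = empRisk ℓ S 0 + metaObjective (centeredLoss ℓ) lam S h := by
  have hregRisk (z : Vec d) :
      regRisk ℓ lam S h z = empRisk ℓ S 0 + regRisk (centeredLoss ℓ) lam S h z := by
    simp only [regRisk, empRisk, centeredLoss, inner_zero_right, Finset.sum_sub_distrib]
    ring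
  simp only [metaObjective, hregRisk]
  exact (add_ciInf (bddBelow_range_regRisk hn hlam (fun k => (hS k).centeredLoss) h) _).symm

lemma convexOn_ciInf {E F : Type*} [AddCommGroup E] [Module ℝ E] [AddCommGroup F] [Module ℝ F]
    {f : E × F → ℝ} (hf : ConvexOn ℝ Set.univ f)
    (hbdd : ∀ x, BddBelow (Set.range fun y => f (x, y))) :
    ConvexOn ℝ Set.univ fun x => ⨅ y, f (x, y) := by
  refine ⟨convex_univ, fun x₁ _ x₂ _ a b ha hb hab => le_of_forall_pos_le_add fun δ hδ => ?_⟩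
  obtain ⟨y₁, hy₁⟩ := exists_lt_of_ciInf_lt (lt_add_of_pos_right (⨅ y, f (x₁, y)) hδ)
  obtain ⟨y₂, hy₂⟩ := exists_lt_of_ciInf_lt (lt_add_of_pos_right (⨅ y, f (x₂, y)) hδ)
  calc ⨅ y, f (a • x₁ + b • x₂, y) ≤ f (a • (x₁, y₁) + b • (x₂, y₂)) :=
        ciInf_le (hbdd _) (a • y₁ + b • y₂)
    _ ≤ a • f (x₁, y₁) + b • f (x₂, y₂) := hf.2 trivial trivial ha hb hab
    _ ≤ a • ((⨅ y, f (x₁, y)) + δ) + b • ((⨅ y, f (x₂, y)) + δ) := by gcongr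
    _ = a • (⨅ y, f (x₁, y)) + b • (⨅ y, f (x₂, y)) + δ := by
      rw [smul_add, smul_add, add_add_add_comm, ← add_smul, hab, one_smul]

lemma convexOn_empRisk (hconv : ∀ y, ConvexOn ℝ Set.univ fun a => ℓ a y) (S : Fin n → Pt d) :
    ConvexOn ℝ Set.univ (empRisk ℓ S) := by
  refine ⟨convex_univ, fun z₁ _ z₂ _ a b ha hb hab => ?_⟩
  have hsum : a • empRisk ℓ S z₁ + b • empRisk ℓ S z₂ = (n : ℝ)⁻¹ *
      ∑ k, (a * ℓ ⟪(S k).1, z₁⟫_ℝ (S k).2 + b * ℓ ⟪(S k).1, z₂⟫_ℝ (S k).2) := by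
    rw [Finset.sum_add_distrib, ← Finset.mul_sum, ← Finset.mul_sum]
    simp only [empRisk, smul_eq_mul]
    ring
  rw [hsum, empRisk]
  gcongr with k
  simpa only [inner_add_right, real_inner_smul_right, smul_eq_mul] using
    (hconv (S k).2).2 (Set.mem_univ ⟪(S k).1, z₁⟫_ℝ) (Set.mem_univ ⟪(S k).1, z₂⟫_ℝ) ha hb hab

lemma convexOn_regRisk (hlam : 0 ≤ lam) (hconv : ∀ y, ConvexOn ℝ Set.univ fun a => ℓ a y)
    (S : Fin n → Pt d) :
    ConvexOn ℝ Set.univ fun p : Vec d × Vec d => regRisk ℓ lam S p.1 p.2 := by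
  have hemp := (convexOn_empRisk hconv S).comp_linearMap (LinearMap.snd ℝ (Vec d) (Vec d))
  have hsq := (convexOn_univ_norm.pow (fun _ _ => norm_nonneg _) 2).comp_linearMap
    (LinearMap.snd ℝ (Vec d) (Vec d) - LinearMap.fst ℝ (Vec d) (Vec d))
  exact hemp.add (hsq.smul (by positivity : 0 ≤ lam / 2))

lemma convexOn_metaObjective {S : Fin n → Pt d} (hn : n ≠ 0) (hlam : 0 < lam)
    (hconv : ∀ y, ConvexOn ℝ Set.univ fun a => ℓ a y) (hS : ∀ k, IsGoodPt ℓ L R (S k)) :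
    ConvexOn ℝ Set.univ (metaObjective ℓ lam S) :=
  convexOn_ciInf (convexOn_regRisk hlam.le hconv S) (bddBelow_range_regRisk hn hlam hS)

/-- Centering the loss shifts both meta-objectives by the same function of the dataset, which need
not be integrable. -/
lemma integral_metaObjective_sub_le {v : ℝ → ℝ → ℝ} (hvm : ∀ a, Measurable (v a))
    (hv : ∀ a y, IsSubgradAt (fun s => ℓ s y) (v a y) a) (hn : n ≠ 0) (hR : 0 < R)
    (hlam : 0 < lam) {μ : Measure (Pt d)} [IsProbabilityMeasure μ]
    (hgood : ∀ᵐ p ∂μ, IsGoodPt ℓ L R p)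
    (hint : ∀ h, Integrable (fun S => metaObjective ℓ lam S h) (iidLaw n μ)) {h : Vec d}
    {w : (Fin n → Pt d) → ℕ → Vec d} {u : (Fin n → Pt d) → Fin n → ℝ}
    (hu : ∀ k, Measurable fun S => u S k) (hw : ∀ S, IsBiasedSGD ℓ lam S h (w S) (u S))
    (h' : Vec d) :
    ∫ S, metaObjective ℓ lam S h ∂(iidLaw n μ) - ∫ S, metaObjective ℓ lam S h' ∂(iidLaw n μ)
      ≤ ∫ S, ⟪metaGradient lam h (w S (n + 1)), h - h'⟫_ℝ ∂(iidLaw n μ)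
        + 2 * R ^ 2 * L ^ 2 * (Real.log n + 1) / (lam * n) := by
  have hcm := measurable_uncurry_centeredLoss hvm hv
  have hcgood : ∀ᵐ p ∂μ, IsGoodPt (centeredLoss ℓ) L R p :=
    hgood.mono fun _ hp => hp.centeredLoss
  have hcint := integrable_metaObjective (n := n) centeredLoss_zero_left hcm hn hlam hcgood
  obtain ⟨m, hmm, hm⟩ := exists_measurable_isComparatorSlope hvm
    (fun a y => (hv a y).centeredLoss) hR hlam
  refine le_of_eq_of_le ?_ (integral_metaObjective_sub_le_of_isComparatorSlope
    centeredLoss_zero_left hcm hlam hcgood hmm hm hn hu (fun S => (hw S).centeredLoss) h')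
  rw [← integral_sub (hint h) (hint h'), ← integral_sub (hcint h) (hcint h')]
  refine integral_congr_ae ?_
  filter_upwards [ae_iidLaw_forall hgood] with S hS
  rw [metaObjective_eq_add hn hlam hS, metaObjective_eq_add hn hlam hS, add_sub_add_left_eq_sub]

end Meta

section Bind

variable {Θ X F : Type*} [MeasurableSpace Θ] [MeasurableSpace X] [NormedAddCommGroup F]
  [NormedSpace ℝ F] {ρ : Measure Θ} {κ : Θ → Measure X} {f : X → F}

lemma aemeasurable_of_bind_ne_zero (hρκ : ρ.bind κ ≠ 0) : AEMeasurable κ ρ := by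
  by_contra hκ
  exact hρκ (by rw [Measure.bind, Measure.map_of_not_aemeasurable hκ, Measure.join_zero])

lemma ae_bind_of_ae_ae (hκ : AEMeasurable κ ρ) {P : X → Prop} (hP : MeasurableSet {x | P x})
    (h : ∀ᵐ θ ∂ρ, ∀ᵐ x ∂(κ θ), P x) : ∀ᵐ x ∂(ρ.bind κ), P x := by
  rw [ae_iff, ← Set.compl_ofPred, Measure.bind_apply hP.compl hκ]
  exact lintegral_eq_zero_of_ae_eq_zero (h.mono fun _ hθ => ae_iff.1 hθ)

lemma exists_kernel_ae_eq (hκ : AEMeasurable κ ρ) :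
    ∃ η : ProbabilityTheory.Kernel Θ X, κ =ᵐ[ρ] η ∧
      ρ.bind κ = (η.comp (ProbabilityTheory.Kernel.const Unit ρ)) () := by
  refine ⟨⟨hκ.mk κ, hκ.measurable_mk⟩, hκ.ae_eq_mk, ?_⟩
  rw [Measure.bind_congr_right hκ.ae_eq_mk, ← Measure.comp_eq_comp_const_apply]
  rfl

lemma integrable_integral_bind (hκ : AEMeasurable κ ρ) (hf : Integrable f (ρ.bind κ)) :
    Integrable (fun θ => ∫ x, f x ∂(κ θ)) ρ := by
  obtain ⟨η, hκη, hη⟩ := exists_kernel_ae_eq hκ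
  rw [hη] at hf
  refine hf.integral_comp.congr (hκη.mono fun θ hθ => ?_)
  simp only [hθ]

lemma integral_bind (hκ : AEMeasurable κ ρ) (hf : Integrable f (ρ.bind κ)) :
    ∫ x, f x ∂(ρ.bind κ) = ∫ θ, ∫ x, f x ∂(κ θ) ∂ρ := by
  obtain ⟨η, hκη, hη⟩ := exists_kernel_ae_eq hκ
  rw [hη] at hf ⊢
  rw [ProbabilityTheory.Kernel.integral_comp hf, ProbabilityTheory.Kernel.const_apply]
  exact integral_congr_ae (hκη.symm.mono fun θ hθ => by simp only [hθ])

end Bind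

section Potential

variable {X V : Type*} [MeasurableSpace X] {ν : Measure X} [IsProbabilityMeasure ν] {T : ℕ}

lemma measurePreserving_finCons :
    MeasurePreserving (fun p : X × (Fin T → X) => (Fin.cons p.1 p.2 : Fin (T + 1) → X))
      (ν.prod (iidLaw T ν)) (iidLaw (T + 1) ν) := by
  simpa [MeasurableEquiv.piFinSuccAbove, Fin.insertNthEquiv] using
    (measurePreserving_piFinSuccAbove (fun _ : Fin (T + 1) => ν) 0).symm

lemma integral_le_of_integral_cons_le {G : (Fin (T + 1) → X) → ℝ}
    (hG : Integrable G (iidLaw (T + 1) ν)) {f : X → ℝ} (hf : Integrable f ν)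
    (hle : ∀ x, Integrable (fun ω : Fin T → X => G (Fin.cons x ω)) (iidLaw T ν) →
      ∫ ω, G (Fin.cons x ω) ∂(iidLaw T ν) ≤ f x) :
    ∫ ω, G ω ∂(iidLaw (T + 1) ν) ≤ ∫ x, f x ∂ν := by
  have hcons := measurePreserving_finCons (ν := ν) (T := T)
  have hGcons := hcons.integrable_comp_of_integrable hG
  rw [← hcons.map_eq, integral_map hcons.aemeasurable
    (hcons.map_eq.symm ▸ hG.aestronglyMeasurable)]
  refine (integral_prod _ hGcons).trans_le (integral_mono_ae hGcons.integral_prod_left hf ?_)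
  filter_upwards [hGcons.prod_right_ae] with x hx using hle x hx

/-- Fubini peels off the samples one at a time, so the state need not depend measurably on
them. -/
lemma integral_le_of_potential {step : V → X → V} {D B : V → ℝ} {c : ℝ} (hB : ∀ v, 0 ≤ B v)
    (hint : ∀ v, Integrable (fun x => B (step v x)) ν)
    (hstep : ∀ v, D v + ∫ x, B (step v x) ∂ν ≤ B v + c) {v : V} {s : (Fin T → X) → ℕ → V}
    (hs₀ : ∀ ω, s ω 0 = v) (hs : ∀ ω (t : Fin T), s ω (t + 1) = step (s ω t) (ω t))
    {G : (Fin T → X) → ℝ} (hG : Integrable G (iidLaw T ν))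
    (hGle : ∀ ω, G ω ≤ ∑ t : Fin T, D (s ω t)) :
    ∫ ω, G ω ∂(iidLaw T ν) ≤ B v + T * c := by
  induction T generalizing v with
  | zero =>
    refine (integral_nonpos fun ω => (hGle ω).trans_eq (by simp)).trans ?_
    simpa using hB v
  | succ T ih =>
    have hbound : Integrable (fun x => D v + T * c + B (step v x)) ν :=
      (integrable_const _).add (hint v)
    refine (integral_le_of_integral_cons_le hG hbound fun x hx => ?_).trans ?_
    · have htail := ih (v := step v x) (s := fun ω t => s (Fin.cons x ω) (t + 1))
        (fun ω => by simpa [hs₀] using hs (Fin.cons x ω) 0)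
        (fun ω t => by simpa using hs (Fin.cons x ω) t.succ)
        (hx.sub (integrable_const (D v)))
        (fun ω => by
          have hω := hGle (Fin.cons x ω)
          rw [Fin.sum_univ_succ] at hω
          simp only [Fin.val_zero, hs₀, Fin.val_succ] at hω
          simp only [Pi.sub_apply]
          linarith)
      rw [integral_sub' hx (integrable_const _), integral_const, probReal_univ, one_smul] at htail
      linarith
    · rw [integral_add (integrable_const _) (hint v), integral_const, probReal_univ, one_smul]
      push_cast
      linarith [hstep v]

end Potential

section StochasticSubgradient

variable {X V : Type*} [MeasurableSpace X] [NormedAddCommGroup V] [InnerProductSpace ℝ V]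
  {ν : Measure X} [IsProbabilityMeasure ν] {γ M : ℝ}

/-- `s` is a run of stochastic gradient descent with step size `γ` and gradient estimates `g`,
started at `v₀` and fed with the samples `ω`. The iterates are numbered from one. -/
structure IsStochasticDescent {T : ℕ} (γ : ℝ) (g : V → X → V) (v₀ : V) (ω : Fin T → X)
    (s : ℕ → V) : Prop where
  init : s 1 = v₀
  step (t : Fin T) : s (t.1 + 2) = s (t.1 + 1) - γ • g (s (t.1 + 1)) (ω t)

lemma norm_sub_smul_sub_sq_div (hγ : γ ≠ 0) (v g h : V) :
    ‖v - γ • g - h‖ ^ 2 / (2 * γ)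
      = ‖v - h‖ ^ 2 / (2 * γ) - ⟪g, v - h⟫_ℝ + γ / 2 * ‖g‖ ^ 2 := by
  rw [sub_right_comm, norm_sub_sq_real, real_inner_smul_right, norm_smul, mul_pow,
    Real.norm_eq_abs, sq_abs, real_inner_comm]
  field_simp

section Step

variable {g : X → V} (hg : AEStronglyMeasurable g ν) (hM : ∀ᵐ x ∂ν, ‖g x‖ ≤ M)
include hg hM

lemma integrable_descent_potential (hγ : γ ≠ 0) (v h : V) :
    Integrable (fun x => ‖v - γ • g x - h‖ ^ 2 / (2 * γ)) ν := by
  simp only [norm_sub_smul_sub_sq_div hγ]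
  exact ((integrable_const _).sub ((Integrable.of_bound hg M hM).inner_const _)).add
    (((MemLp.of_bound hg M hM).integrable_norm_pow two_ne_zero).const_mul _)

lemma integral_inner_add_descent_potential_le (hγ : 0 < γ) (v h : V) :
    ∫ x, ⟪g x, v - h⟫_ℝ ∂ν + ∫ x, ‖v - γ • g x - h‖ ^ 2 / (2 * γ) ∂ν
      ≤ ‖v - h‖ ^ 2 / (2 * γ) + γ * M ^ 2 / 2 := by
  have hinner := (Integrable.of_bound hg M hM).inner_const (𝕜 := ℝ) (v - h)
  rw [← integral_add hinner (integrable_descent_potential hg hM hγ.ne' v h)]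
  refine (integral_mono_ae (hinner.add (integrable_descent_potential hg hM hγ.ne' v h))
    (integrable_const (‖v - h‖ ^ 2 / (2 * γ) + γ * M ^ 2 / 2)) ?_).trans_eq (by simp)
  filter_upwards [hM] with x hx
  have hsq : ‖g x‖ ^ 2 ≤ M ^ 2 := by gcongr
  simp only [Pi.add_apply, norm_sub_smul_sub_sq_div hγ.ne']
  linarith [mul_le_mul_of_nonneg_left hsq hγ.le]

end Step

lemma card_mul_average_sub_le {E : V → ℝ} (hE : ConvexOn ℝ Set.univ E) {T : ℕ} (hT : T ≠ 0)
    (s : Fin T → V) (c : ℝ) :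
    T * (E ((T : ℝ)⁻¹ • ∑ t, s t) - c) ≤ ∑ t, (E (s t) - c) := by
  have hT₀ : (T : ℝ) ≠ 0 := by positivity
  have hJensen := hE.map_sum_le (t := Finset.univ) (w := fun _ : Fin T => (T : ℝ)⁻¹) (p := s)
    (fun _ _ => by positivity) (by simp [hT₀]) (fun _ _ => Set.mem_univ _)
  rw [← Finset.smul_sum, ← Finset.smul_sum, smul_eq_mul, ← div_eq_inv_mul,
    le_div_iff₀' (by positivity)] at hJensen
  simpa [mul_sub] using hJensen

theorem integral_average_sub_le_of_isStochasticDescent {E : V → ℝ}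
    (hE : ConvexOn ℝ Set.univ E) {g : V → X → V} (hg : ∀ v, AEStronglyMeasurable (g v) ν)
    (hM : ∀ v, ∀ᵐ x ∂ν, ‖g v x‖ ≤ M) {h : V} {ε : ℝ}
    (hsub : ∀ v, E v - E h ≤ ∫ x, ⟪g v x, v - h⟫_ℝ ∂ν + ε) (hγ : 0 < γ) {T : ℕ} (hT : T ≠ 0)
    {v₀ : V} {s : (Fin T → X) → ℕ → V} (hs : ∀ ω, IsStochasticDescent γ g v₀ ω (s ω))
    (hint : Integrable (fun ω => E ((T : ℝ)⁻¹ • ∑ t : Fin T, s ω (t.1 + 1))) (iidLaw T ν)) :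
    ∫ ω, E ((T : ℝ)⁻¹ • ∑ t : Fin T, s ω (t.1 + 1)) ∂(iidLaw T ν) - E h
      ≤ ‖v₀ - h‖ ^ 2 / (2 * γ * T) + γ * M ^ 2 / 2 + ε := by
  have hdrift (v : V) : (E v - E h) + ∫ x, ‖v - γ • g v x - h‖ ^ 2 / (2 * γ) ∂ν
      ≤ ‖v - h‖ ^ 2 / (2 * γ) + (γ * M ^ 2 / 2 + ε) := by
    linarith [hsub v, integral_inner_add_descent_potential_le (hg v) (hM v) hγ v h]
  have hsum := integral_le_of_potential (step := fun v x => v - γ • g v x)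
    (B := fun v => ‖v - h‖ ^ 2 / (2 * γ)) (s := fun ω t => s ω (t + 1))
    (G := fun ω => T * (E ((T : ℝ)⁻¹ • ∑ t : Fin T, s ω (t.1 + 1)) - E h)) (fun v => by positivity)
    (fun v => integrable_descent_potential (hg v) (hM v) hγ.ne' v h) hdrift
    (fun ω => (hs ω).init) (fun ω => (hs ω).step) ((hint.sub (integrable_const (E h))).const_mul T)
    (fun ω => card_mul_average_sub_le hE hT _ _)
  rw [integral_const_mul, integral_sub hint (integrable_const _), integral_const, probReal_univ,
    one_smul] at hsum
  have hT₀ : (0 : ℝ) < T := by positivity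
  refine le_of_mul_le_mul_left (hsum.trans_eq ?_) hT₀
  field_simp
  ring

end StochasticSubgradient

section Environment

variable {d n : ℕ} {ℓ : ℝ → ℝ → ℝ} {lam L R : ℝ} {Θ : Type*} [MeasurableSpace Θ]

/-- The transfer risk `Ê_n(h)` of the bias `h`: the meta-objective averaged over the environment `ρ`
of the tasks `task θ`. -/
def transferRisk (ℓ : ℝ → ℝ → ℝ) (lam : ℝ) (n : ℕ) (ρ : Measure Θ) (task : Θ → Measure (Pt d))
    (h : Vec d) : ℝ :=
  ∫ θ, ∫ S, metaObjective ℓ lam S h ∂(iidLaw n (task θ)) ∂ρ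

/-- The joint law of the parameter `θ` of a task and a dataset drawn from that task. -/
def obsLaw (n : ℕ) (task : Θ → Measure (Pt d)) (θ : Θ) : Measure (Θ × (Fin n → Pt d)) :=
  (Measure.dirac θ).prod (iidLaw n (task θ))

variable {ρ : Measure Θ} {task : Θ → Measure (Pt d)} [∀ θ, IsProbabilityMeasure (task θ)]

lemma measurePreserving_snd_obsLaw (θ : Θ) :
    MeasurePreserving Prod.snd (obsLaw n task θ) (iidLaw n (task θ)) :=
  measurePreserving_snd

lemma convexOn_transferRisk (hn : n ≠ 0) (hlam : 0 < lam)
    (hconv : ∀ y, ConvexOn ℝ Set.univ fun a => ℓ a y)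
    (hgood : ∀ᵐ θ ∂ρ, ∀ᵐ p ∂(task θ), IsGoodPt ℓ L R p)
    (hinner : ∀ᵐ θ ∂ρ, ∀ h, Integrable (fun S => metaObjective ℓ lam S h) (iidLaw n (task θ)))
    (houter : ∀ h, Integrable (fun θ => ∫ S, metaObjective ℓ lam S h ∂(iidLaw n (task θ))) ρ) :
    ConvexOn ℝ Set.univ (transferRisk ℓ lam n ρ task) := by
  refine integral_convexOn_of_integrand_ae convex_univ ?_ fun h _ => houter h
  filter_upwards [hgood, hinner] with θ hθ hintθ
  refine integral_convexOn_of_integrand_ae convex_univ ?_ fun h _ => hintθ h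
  exact (ae_iidLaw_forall hθ).mono fun S hS => convexOn_metaObjective hn hlam hconv hS

lemma exists_measurable_isSubgradAt (hd : d ≠ 0) (hn : n ≠ 0)
    {W : Vec d → (Fin n → Pt d) → ℕ → Vec d} {u : Vec d → (Fin n → Pt d) → Fin n → ℝ}
    (hu : ∀ h k, Measurable fun S => u h S k)
    (hW : ∀ h S, IsBiasedSGD ℓ lam S h (W h S) (u h S)) :
    ∃ v : ℝ → ℝ → ℝ, (∀ a, Measurable (v a)) ∧
      ∀ a y, IsSubgradAt (fun s => ℓ s y) (v a y) a := by
  let e : Vec d := EuclideanSpace.single ⟨0, Nat.pos_of_ne_zero hd⟩ 1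
  let k : Fin n := ⟨0, Nat.pos_of_ne_zero hn⟩
  -- The first iterate is the bias, so the bias `a • e` and the input `e` give the prediction `a`.
  refine ⟨fun a y => u (a • e) (fun _ => (e, y)) k, fun a => ?_, fun a y => ?_⟩
  · exact (hu (a • e) k).comp (measurable_pi_lambda _ fun _ => measurable_prodMk_left)
  · have hprediction : ⟪e, W (a • e) (fun _ => (e, y)) (k.1 + 1)⟫_ℝ = a := by
      rw [(hW (a • e) fun _ => (e, y)).init, real_inner_smul_right]
      simp [e]
    simpa only [hprediction] using (hW (a • e) fun _ => (e, y)).isSubgradAt k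

section Gradient

variable {h : Vec d} {w : (Fin n → Pt d) → ℕ → Vec d} {u : (Fin n → Pt d) → Fin n → ℝ}
  (hu : ∀ k, Measurable fun S => u S k) (hw : ∀ S, IsBiasedSGD ℓ lam S h (w S) (u S))
include hu hw

lemma measurable_metaGradient :
    Measurable fun S : Fin n → Pt d => metaGradient lam h (w S (n + 1)) :=
  ((measurable_biasedSGD hu hw le_rfl).sub_const h).const_smul (-lam)

lemma ae_bind_obsLaw_norm_metaGradient_le (hn : n ≠ 0) (hlam : lam ≠ 0)
    (hgood : ∀ᵐ θ ∂ρ, ∀ᵐ p ∂(task θ), IsGoodPt ℓ L R p) (hobs : AEMeasurable (obsLaw n task) ρ) :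
    ∀ᵐ x ∂(ρ.bind (obsLaw n task)), ‖metaGradient lam h (w x.2 (n + 1))‖ ≤ L * R := by
  refine ae_bind_of_ae_ae hobs (measurableSet_le
    ((measurable_metaGradient hu hw).comp measurable_snd).norm measurable_const) ?_
  filter_upwards [hgood] with θ hθ
  refine (measurePreserving_snd_obsLaw θ).quasiMeasurePreserving.ae
    (p := fun S => ‖metaGradient lam h (w S (n + 1))‖ ≤ L * R) ?_
  exact (ae_iidLaw_forall hθ).mono fun S hS => (hw S).norm_metaGradient_le hlam hn hS

variable [IsProbabilityMeasure ρ] [IsProbabilityMeasure (ρ.bind (obsLaw n task))]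

lemma transferRisk_sub_le {v : ℝ → ℝ → ℝ} (hvm : ∀ a, Measurable (v a))
    (hv : ∀ a y, IsSubgradAt (fun s => ℓ s y) (v a y) a) (hn : n ≠ 0) (hR : 0 < R)
    (hlam : 0 < lam) (hgood : ∀ᵐ θ ∂ρ, ∀ᵐ p ∂(task θ), IsGoodPt ℓ L R p)
    (hinner : ∀ᵐ θ ∂ρ, ∀ h, Integrable (fun S => metaObjective ℓ lam S h) (iidLaw n (task θ)))
    (houter : ∀ h, Integrable (fun θ => ∫ S, metaObjective ℓ lam S h ∂(iidLaw n (task θ))) ρ)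
    (h' : Vec d) :
    transferRisk ℓ lam n ρ task h - transferRisk ℓ lam n ρ task h'
      ≤ ∫ x, ⟪metaGradient lam h (w x.2 (n + 1)), h - h'⟫_ℝ ∂(ρ.bind (obsLaw n task))
        + 2 * R ^ 2 * L ^ 2 * (Real.log n + 1) / (lam * n) := by
  have hobs : AEMeasurable (obsLaw n task) ρ :=
    aemeasurable_of_bind_ne_zero (IsProbabilityMeasure.ne_zero _)
  have hgrad := measurable_metaGradient hu hw
  have hinnerObs : Integrable (fun x => ⟪metaGradient lam h (w x.2 (n + 1)), h - h'⟫_ℝ)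
      (ρ.bind (obsLaw n task)) :=
    (Integrable.of_bound (hgrad.comp measurable_snd).aestronglyMeasurable _
      (ae_bind_obsLaw_norm_metaGradient_le hu hw hn hlam.ne' hgood hobs)).inner_const _
  have houterObs := integrable_integral_bind hobs hinnerObs
  have herror : Integrable (fun _ => 2 * R ^ 2 * L ^ 2 * (Real.log n + 1) / (lam * n)) ρ :=
    integrable_const _
  rw [transferRisk, transferRisk, ← integral_sub (houter h) (houter h'),
    integral_bind hobs hinnerObs]
  refine (integral_mono_ae ((houter h).sub (houter h')) (houterObs.add herror) ?_).trans_eq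
    (by rw [integral_add' houterObs herror]; simp)
  filter_upwards [hgood, hinner] with θ hθ hintθ
  have hsnd : ∫ x, ⟪metaGradient lam h (w x.2 (n + 1)), h - h'⟫_ℝ ∂(obsLaw n task θ)
      = ∫ S, ⟪metaGradient lam h (w S (n + 1)), h - h'⟫_ℝ ∂(iidLaw n (task θ)) := by
    rw [← (measurePreserving_snd_obsLaw (n := n) (task := task) θ).map_eq, integral_map
      measurable_snd.aemeasurable (hgrad.inner_const).aestronglyMeasurable]
  simp only [Pi.add_apply, Pi.sub_apply, hsnd]
  exact integral_metaObjective_sub_le hvm hv hn hR hlam hθ hintθ hu hw h'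

end Gradient

end Environment

lemma regret_stepSize_le {a M c γ : ℝ} {T : ℕ} (ha : 0 < a) (hM : 0 < M) (hc : 1 ≤ c) (hT : T ≠ 0)
    (hγ : γ = √2 * a / M * (√(T * c))⁻¹) :
    a ^ 2 / (2 * γ * T) + γ * M ^ 2 / 2 ≤ a * M * √(2 * c / T) := by
  have : (0 : ℝ) < T := by positivity
  set q := √(2 * c / T)
  have hq : 0 < q := by positivity
  have hq2 : q ^ 2 = 2 * c / T := Real.sq_sqrt (by positivity)
  have hsqrt : √(T * c) = T * q / √2 := by
    rw [Real.sqrt_eq_iff_eq_sq (by positivity) (by positivity), div_pow, mul_pow, hq2,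
      Real.sq_sqrt zero_le_two]
    field_simp
  have hγq : γ = 2 * a / (M * T * q) := by
    rw [hγ, hsqrt]
    field_simp
    exact Real.sq_sqrt zero_le_two
  have hfirst : a ^ 2 / (2 * γ * T) = a * M * q / 4 := by
    rw [hγq]
    field_simp
    norm_num
  have hsecond : γ * M ^ 2 / 2 = a * M * q / (2 * c) := by
    rw [show 2 * c = T * q ^ 2 by rw [hq2]; field_simp, hγq]
    field_simp
  calc a ^ 2 / (2 * γ * T) + γ * M ^ 2 / 2
      ≤ a * M * q / 4 + a * M * q / 2 := by rw [hfirst, hsecond]; gcongr; linarith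
    _ ≤ a * M * q := by linarith [show 0 ≤ a * M * q by positivity]

theorem stmt17_general {d n T : ℕ} (hd : d ≠ 0) (hn : n ≠ 0) (hT : T ≠ 0) {R L lam γ : ℝ}
    (hR : 0 < R) (hlam : 0 < lam) (hγ : 0 < γ) {ℓ : ℝ → ℝ → ℝ} {Θ : Type*} [MeasurableSpace Θ]
    {ρ : Measure Θ} [IsProbabilityMeasure ρ] {task : Θ → Measure (Pt d)}
    [∀ θ, IsProbabilityMeasure (task θ)] [IsProbabilityMeasure (ρ.bind (obsLaw n task))]
    (hgood : ∀ᵐ θ ∂ρ, ∀ᵐ p ∂(task θ), IsGoodPt ℓ L R p)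
    {W : Vec d → (Fin n → Pt d) → ℕ → Vec d} {u : Vec d → (Fin n → Pt d) → Fin n → ℝ}
    (hu : ∀ h k, Measurable fun S => u h S k)
    (hW : ∀ h S, IsBiasedSGD ℓ lam S h (W h S) (u h S)) {h₀ : Vec d}
    {H : (Fin T → Θ × (Fin n → Pt d)) → ℕ → Vec d}
    (hH : ∀ ω, IsStochasticDescent γ (fun h x => metaGradient lam h (W h x.2 (n + 1))) h₀ ω (H ω))
    (hinner : ∀ᵐ θ ∂ρ, ∀ h, Integrable (fun S => metaObjective ℓ lam S h) (iidLaw n (task θ)))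
    (houter : ∀ h, Integrable (fun θ => ∫ S, metaObjective ℓ lam S h ∂(iidLaw n (task θ))) ρ)
    (hmeta : Integrable
      (fun ω => transferRisk ℓ lam n ρ task ((T : ℝ)⁻¹ • ∑ t : Fin T, H ω (t.1 + 1)))
      (iidLaw T (ρ.bind (obsLaw n task))))
    (h' : Vec d) :
    ∫ ω, transferRisk ℓ lam n ρ task ((T : ℝ)⁻¹ • ∑ t : Fin T, H ω (t.1 + 1))
        ∂(iidLaw T (ρ.bind (obsLaw n task))) - transferRisk ℓ lam n ρ task h'
      ≤ ‖h₀ - h'‖ ^ 2 / (2 * γ * T) + γ * (L * R) ^ 2 / 2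
        + 2 * R ^ 2 * L ^ 2 * (Real.log n + 1) / (lam * n) := by
  obtain ⟨v, hvm, hv⟩ := exists_measurable_isSubgradAt hd hn hu hW
  have hobs : AEMeasurable (obsLaw n task) ρ :=
    aemeasurable_of_bind_ne_zero (IsProbabilityMeasure.ne_zero _)
  have hconvex : ConvexOn ℝ Set.univ (transferRisk ℓ lam n ρ task) :=
    convexOn_transferRisk hn hlam (fun y => convexOn_univ_of_isSubgradAt fun a => hv a y) hgood
      hinner houter
  exact integral_average_sub_le_of_isStochasticDescent hconvex
    (fun h => ((measurable_metaGradient (hu h) (hW h)).comp measurable_snd).aestronglyMeasurable)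
    (fun h => ae_bind_obsLaw_norm_metaGradient_le (hu h) (hW h) hn hlam.ne' hgood hobs)
    (fun h => transferRisk_sub_le (hu h) (hW h) hvm hv hn hR hlam hgood hinner houter h') hγ hT hH
    hmeta

/-- Convergence rate of the meta-algorithm with approximate gradients:
for a fixed nonzero comparator `ĥ` and step size
`γ = (√2‖ĥ‖/(LR))·(T(1 + 4(log n + 1)/n))^{-1/2}`,
`E[Ê_n(h̄_T)] - Ê_n(ĥ) ≤ ‖ĥ‖LR√(2(1 + 4(log n + 1)/n)/T) + 2R²L²(log n + 1)/(λn)`,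
where `Ê_n(h) = E_{μ∼ρ} E_{Z_n∼μⁿ} L_{Z_n}(h)`. -/
theorem stmt17
    (d n T : ℕ) (hd : 1 ≤ d) (hn : 1 ≤ n) (hT : 1 ≤ T)
    (R L lam : ℝ) (hR : 0 < R) (hL : 0 < L) (hlam : 0 < lam)
    (Y : Set ℝ) (ℓ : ℝ → ℝ → ℝ)
    (hℓ0 : ∀ a y, y ∈ Y → 0 ≤ ℓ a y)
    (hℓconv : ∀ y ∈ Y, ConvexOn ℝ Set.univ fun a => ℓ a y)
    (hℓlip : ∀ y ∈ Y, ∀ a b, |ℓ a y - ℓ b y| ≤ L * |a - b|)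
    -- the environment of tasks
    (Θ : Type*) [MeasurableSpace Θ]
    (ρ : Measure Θ) [IsProbabilityMeasure ρ]
    (task : Θ → Measure (Pt d))
    (htaskprob : ∀ θ, IsProbabilityMeasure (task θ))
    [hsig : ∀ θ, SigmaFinite (task θ)]
    (htaskY : ∀ θ, ∀ᵐ z ∂(task θ), z.2 ∈ Y)
    (htaskR : ∀ θ, ∀ᵐ z ∂(task θ), ‖z.1‖ ≤ R)
    -- the fixed comparator and the step size
    (hhat : Vec d) (hhat0 : hhat ≠ 0)
    (γ : ℝ)
    (hγ : γ = Real.sqrt 2 * ‖hhat‖ / (L * R) *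
      (Real.sqrt ((T : ℝ) * (1 + 4 * (Real.log n + 1) / n)))⁻¹)
    -- Algorithm 1 run with an arbitrary bias `h`
    (W : Vec d → (Fin n → Pt d) → ℕ → Vec d)
    (u' : Vec d → (Fin n → Pt d) → Fin n → ℝ)
    (hu'meas : ∀ h k, Measurable fun S => u' h S k)
    (hW1 : ∀ h S, W h S 1 = h)
    (hsub : ∀ h S (k : Fin n),
      IsSubgradAt (fun a => ℓ a (S k).2) (u' h S k) (⟪(S k).1, W h S (k.1 + 1)⟫_ℝ))
    (hrec : ∀ h S (k : Fin n), W h S (k.1 + 2)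
      = W h S (k.1 + 1) - (((k.1 + 1 : ℕ) : ℝ) * lam)⁻¹ •
          (u' h S k • (S k).1 + lam • (W h S (k.1 + 1) - h)))
    -- the joint distribution of one (task, dataset) observation
    (ν : Measure (Θ × (Fin n → Pt d))) [IsProbabilityMeasure ν]
    (hν : ν = ρ.bind fun θ =>
      (Measure.dirac θ).prod (Measure.pi fun _ : Fin n => task θ))
    -- Algorithm 2: meta-SGD with approximate meta-gradients
    (H : (Fin T → Θ × (Fin n → Pt d)) → ℕ → Vec d)
    (hH1 : ∀ ω, H ω 1 = 0)
    (hHrec : ∀ ω (t : Fin T), H ω (t.1 + 2)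
      = H ω (t.1 + 1) - γ •
          ((-lam) • (W (H ω (t.1 + 1)) (ω t).2 (n + 1) - H ω (t.1 + 1))))
    -- integrability of all integrands involved
    (hIntInner : ∀ (h : Vec d) θ, Integrable
      (fun S => ⨅ w : Vec d, regRisk ℓ lam S h w)
      (Measure.pi fun _ : Fin n => task θ))
    (hIntOuter : ∀ h : Vec d, Integrable (fun θ =>
      ∫ S, (⨅ w : Vec d, regRisk ℓ lam S h w)
        ∂(Measure.pi fun _ : Fin n => task θ)) ρ)
    (hIntMeta : Integrable (fun ω =>
      ∫ θ, (∫ S, (⨅ w : Vec d,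
          regRisk ℓ lam S ((T : ℝ)⁻¹ • ∑ t : Fin T, H ω (t.1 + 1)) w)
        ∂(Measure.pi fun _ : Fin n => task θ)) ∂ρ)
      (Measure.pi fun _ : Fin T => ν)) :
    (∫ ω, (∫ θ, (∫ S, (⨅ w : Vec d,
          regRisk ℓ lam S ((T : ℝ)⁻¹ • ∑ t : Fin T, H ω (t.1 + 1)) w)
        ∂(Measure.pi fun _ : Fin n => task θ)) ∂ρ)
      ∂(Measure.pi fun _ : Fin T => ν))
      - (∫ θ, (∫ S, (⨅ w : Vec d, regRisk ℓ lam S hhat w)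
          ∂(Measure.pi fun _ : Fin n => task θ)) ∂ρ)
      ≤ ‖hhat‖ * (L * R) * Real.sqrt (2 * (1 + 4 * (Real.log n + 1) / n) / T)
        + 2 * R ^ 2 * L ^ 2 * (Real.log n + 1) / (lam * n) := by
  have hgood θ : ∀ᵐ p ∂(task θ), IsGoodPt ℓ L R p := by
    filter_upwards [htaskR θ, htaskY θ] with p hpR hpY using ⟨hpR, hℓlip p.2 hpY⟩
  have hc : 1 ≤ 1 + 4 * (Real.log n + 1) / n :=
    le_add_of_nonneg_right (by have := Real.log_natCast_nonneg n; positivity)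
  have hnorm : 0 < ‖hhat‖ := norm_pos_iff.2 hhat0
  have hγ₀ : 0 < γ := by rw [hγ]; positivity
  change ν = ρ.bind (obsLaw n task) at hν
  subst hν
  refine (stmt17_general (by omega) (by omega) (by omega) hR hlam hγ₀ (ae_of_all _ hgood) hu'meas
    (fun h S => ⟨hW1 h S, hsub h S, hrec h S⟩) (fun ω => ⟨hH1 ω, hHrec ω⟩)
    (ae_of_all _ fun θ h => hIntInner h θ) hIntOuter hIntMeta hhat).trans ?_
  rw [zero_sub, norm_neg]
  gcongr
  exact regret_stepSize_le hnorm (mul_pos hL hR) hc (by omega) hγ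
end
end

section
/- (Excess transfer risk for a fixed bias, ERM algorithm.) Under bounded inputs and Lipschitz loss, let h ∈ ℝ^d be fixed with Var_h > 0 and R, L > 0, and let w_h be the biased ERM algorithm run with regularization parameter λ = (R L / Var_h) · n^{−1/2}. Then E_n(w_h) − E_ρ ≤ 2 R L · Var_h · n^{−1/2}. -/
open MeasureTheory Real
open scoped InnerProductSpace

noncomputable section

/-! The stochastic part is a leave-one-out argument. Given `n + 1` i.i.d. examples, let `u` minimize
the sum of all `n + 1` losses plus `n * m / 2 * ‖· - h‖ ^ 2`, and let `vᵢ` be the biased ERM trained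
without the `i`-th example. Both objectives are `n * m`-strongly convex and they differ by one
`K`-Lipschitz loss, so the `i`-th loss at `vᵢ` exceeds that at `u` by at most `K ^ 2 / (n * m)`.
Summing over `i`, comparing `u` with a competitor `w`, and using that `vᵢ` is independent of the
`i`-th example, the expected excess risk of the ERM over `w` is at most
`m / 2 * ‖w - h‖ ^ 2 + K ^ 2 / (m * n)`. Averaging over tasks turns this into
`m * V ^ 2 + K ^ 2 / (m * n)`, whose two terms are equal for `m = K / (V * √n)`. -/

section StrongConvexity

variable {E : Type*} [NormedAddCommGroup E] [NormedSpace ℝ E] {s : Set E} {φ g : E → ℝ} {m : ℝ}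

theorem add_half_mul_sq_dist_le_of_isMinOn (hφ : StrongConvexOn s m φ) {u w : E} (hus : u ∈ s)
    (hws : w ∈ s) (hu : IsMinOn φ s u) : φ u + m / 2 * ‖w - u‖ ^ 2 ≤ φ w := by
  have along_segment : ∀ t ∈ Set.Ioc (0 : ℝ) 1,
      φ u + (1 - t) * (m / 2 * ‖w - u‖ ^ 2) ≤ φ w := fun t ht => by
    have hconv := hφ.2 hws hus ht.1.le (sub_nonneg.2 ht.2) (add_sub_cancel t 1)
    have hmin := hu (hφ.1 hws hus ht.1.le (sub_nonneg.2 ht.2) (add_sub_cancel t 1))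
    simp only [smul_eq_mul, Set.mem_ofPred_eq] at hconv hmin
    refine le_of_mul_le_mul_left ?_ ht.1
    linarith
  have hlim : Filter.Tendsto (fun t : ℝ => φ u + (1 - t) * (m / 2 * ‖w - u‖ ^ 2))
      (nhdsWithin 0 (Set.Ioi 0)) (nhds (φ u + m / 2 * ‖w - u‖ ^ 2)) :=
    (Continuous.tendsto' (by fun_prop) 0 _ (by simp)).mono_left nhdsWithin_le_nhds
  refine le_of_tendsto hlim ?_
  filter_upwards [Ioc_mem_nhdsGT zero_lt_one] with t ht using along_segment t ht

theorem add_mul_sq_dist_le_midpoint (hφ : StrongConvexOn s m φ) {a : ℝ} (ha : ∀ w ∈ s, a ≤ φ w)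
    {x y : E} (hx : x ∈ s) (hy : y ∈ s) : a + m / 8 * ‖x - y‖ ^ 2 ≤ (φ x + φ y) / 2 := by
  have hhalf : (0 : ℝ) ≤ 1 / 2 := by norm_num
  have hconv := hφ.2 hx hy hhalf hhalf (add_halves 1)
  have hmid := ha _ (hφ.1 hx hy hhalf hhalf (add_halves 1))
  simp only [smul_eq_mul] at hconv
  linarith

theorem exists_isMinOn_of_strongConvexOn [CompleteSpace E] (hs : IsClosed s) (hne : s.Nonempty)
    (hm : 0 < m) (hφ : StrongConvexOn s m φ) (hcont : ContinuousOn φ s)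
    (hbdd : BddBelow (φ '' s)) : ∃ u ∈ s, IsMinOn φ s u := by
  have hinf : ∀ w ∈ s, sInf (φ '' s) ≤ φ w := fun w hw => csInf_le hbdd (Set.mem_image_of_mem φ hw)
  have hmin_seq : ∀ k : ℕ, ∃ x ∈ s, φ x < sInf (φ '' s) + 1 / ((k : ℝ) + 1) := fun k => by
    simpa using exists_lt_of_csInf_lt (hne.image φ)
      (lt_add_of_pos_right (sInf (φ '' s)) (Nat.one_div_pos_of_nat (α := ℝ) (n := k)))
  choose x hxs hx using hmin_seq
  have hlim : Filter.Tendsto (fun k : ℕ => 1 / ((k : ℝ) + 1)) Filter.atTop (nhds 0) :=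
    tendsto_one_div_add_atTop_nhds_zero_nat
  have hcauchy : CauchySeq x := by
    refine cauchySeq_of_le_tendsto_0' (fun k => √(8 / m * (1 / ((k : ℝ) + 1))))
      (fun j k hjk => ?_) ?_
    · rw [dist_eq_norm]
      refine Real.le_sqrt_of_sq_le ?_
      have hmid := add_mul_sq_dist_le_midpoint hφ hinf (hxs j) (hxs k)
      have hanti : 1 / ((k : ℝ) + 1) ≤ 1 / ((j : ℝ) + 1) := Nat.one_div_le_one_div hjk
      have hsq : m / 8 * ‖x j - x k‖ ^ 2 ≤ 1 / ((j : ℝ) + 1) := by linarith [hx j, hx k]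
      calc ‖x j - x k‖ ^ 2 = 8 / m * (m / 8 * ‖x j - x k‖ ^ 2) := by field_simp
        _ ≤ 8 / m * (1 / ((j : ℝ) + 1)) := by gcongr
    · simpa using (hlim.const_mul (8 / m)).sqrt
  obtain ⟨u, hu⟩ := cauchySeq_tendsto_of_complete hcauchy
  have hus : u ∈ s := hs.mem_of_tendsto hu (.of_forall hxs)
  have hφu : Filter.Tendsto (φ ∘ x) Filter.atTop (nhds (φ u)) :=
    (hcont u hus).tendsto.comp (tendsto_nhdsWithin_iff.2 ⟨hu, .of_forall hxs⟩)
  have hle : φ u ≤ sInf (φ '' s) :=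
    le_of_tendsto_of_tendsto' hφu (by simpa using hlim.const_add _) fun k => (hx k).le
  exact ⟨u, hus, fun w hw => hle.trans (hinf w hw)⟩

theorem sub_le_sq_div_of_isMinOn_of_isMinOn_add (hm : 0 < m) (hφ : StrongConvexOn s m φ)
    (hφg : StrongConvexOn s m (φ + g)) {K : NNReal} (hg : LipschitzOnWith K g s) {u v : E}
    (hus : u ∈ s) (hvs : v ∈ s) (hv : IsMinOn φ s v) (hu : IsMinOn (φ + g) s u) :
    g v - g u ≤ K ^ 2 / m := by
  have hgrowth_u := add_half_mul_sq_dist_le_of_isMinOn hφg hus hvs hu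
  have hgrowth_v := add_half_mul_sq_dist_le_of_isMinOn hφ hvs hus hv
  have hlip : g v - g u ≤ K * ‖v - u‖ := by
    simpa only [Real.dist_eq, dist_eq_norm] using (le_abs_self _).trans (hg.dist_le_mul v hvs u hus)
  rw [norm_sub_rev u v] at hgrowth_v
  simp only [Pi.add_apply] at hgrowth_u
  have hquad : m * ‖v - u‖ ^ 2 ≤ g v - g u := by linarith
  rw [le_div_iff₀ hm]
  nlinarith only [hquad, hlip, hm, sq_nonneg (K - m * ‖v - u‖)]

end StrongConvexity

theorem convexOn_sum {F ι : Type*} [AddCommGroup F] [Module ℝ F] {s : Set F} (hs : Convex ℝ s)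
    {t : Finset ι} {g : ι → F → ℝ} (hg : ∀ i ∈ t, ConvexOn ℝ s (g i)) :
    ConvexOn ℝ s fun w => ∑ i ∈ t, g i w := by
  classical
  induction t using Finset.induction_on with
  | empty => simpa using convexOn_const (0 : ℝ) hs
  | insert i t hi ih =>
    simp only [Finset.sum_insert hi]
    exact (hg i (t.mem_insert_self i)).add (ih fun j hj => hg j (Finset.mem_insert_of_mem hj))

theorem lipschitzWith_sum {X ι : Type*} [PseudoEMetricSpace X] {t : Finset ι} {g : ι → X → ℝ}
    {C : ι → NNReal} (hg : ∀ i ∈ t, LipschitzWith (C i) (g i)) :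
    LipschitzWith (∑ i ∈ t, C i) fun x => ∑ i ∈ t, g i x := by
  classical
  induction t using Finset.induction_on with
  | empty => simp
  | insert i t hi ih =>
    simp only [Finset.sum_insert hi]
    exact (hg i (t.mem_insert_self i)).add (ih fun j hj => hg j (Finset.mem_insert_of_mem hj))

section Tikhonov

variable {E : Type*} [NormedAddCommGroup E] {f : E → ℝ} {m : ℝ} {h : E} {K : NNReal}

/-- The Tikhonov regularization of the objective `f` with parameter `m`, biased towards `h`. -/
def tikhonov (m : ℝ) (h : E) (f : E → ℝ) (w : E) : ℝ :=
  f w + m / 2 * ‖w - h‖ ^ 2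

theorem continuous_tikhonov (hf : Continuous f) : Continuous (tikhonov m h f) := by
  unfold tikhonov
  fun_prop

theorem bddBelow_image_tikhonov (hm : 0 < m) (hf : LipschitzWith K f) (s : Set E) :
    BddBelow (tikhonov m h f '' s) := by
  refine ⟨f h - K ^ 2 / (2 * m), Set.forall_mem_image.2 fun w _ => ?_⟩
  have hlip : f h - f w ≤ K * ‖w - h‖ := by
    simpa only [Real.dist_eq, dist_eq_norm'] using (le_abs_self _).trans (hf.dist_le_mul h w)
  have hsquare : K * ‖w - h‖ - m / 2 * ‖w - h‖ ^ 2 ≤ K ^ 2 / (2 * m) := by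
    rw [le_div_iff₀ (by positivity)]
    linarith [sq_nonneg (K - m * ‖w - h‖)]
  unfold tikhonov
  linarith

variable [InnerProductSpace ℝ E]

theorem strongConvexOn_tikhonov {s : Set E} (hf : ConvexOn ℝ s f) (m : ℝ) (h : E) :
    StrongConvexOn s m (tikhonov m h f) := by
  rw [strongConvexOn_iff_convex]
  have hexpand : (fun w => tikhonov m h f w - m / 2 * ‖w‖ ^ 2)
      = fun w => f w + (innerₗ E (-m • h) w + m / 2 * ‖h‖ ^ 2) := by
    funext w
    rw [tikhonov, norm_sub_sq_real, innerₗ_apply_apply, real_inner_smul_left, real_inner_comm]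
    ring
  rw [hexpand]
  exact hf.add (((innerₗ E (-m • h)).convexOn hf.1).add_const _)

theorem exists_isMinOn_tikhonov [CompleteSpace E] (hm : 0 < m) (hconv : ConvexOn ℝ Set.univ f)
    (hlip : LipschitzWith K f) (h : E) : ∃ u, IsMinOn (tikhonov m h f) Set.univ u := by
  simpa using exists_isMinOn_of_strongConvexOn isClosed_univ Set.univ_nonempty hm
    (strongConvexOn_tikhonov hconv m h) (continuous_tikhonov hlip.continuous).continuousOn
    (bddBelow_image_tikhonov hm hlip _)

theorem norm_sub_le_of_isMinOn_tikhonov (hm : 0 < m) (hconv : ConvexOn ℝ Set.univ f)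
    (hlip : LipschitzWith K f) {u : E} (hu : IsMinOn (tikhonov m h f) Set.univ u) :
    ‖u - h‖ ≤ K / m := by
  have hgrowth := add_half_mul_sq_dist_le_of_isMinOn (strongConvexOn_tikhonov hconv m h)
    (Set.mem_univ u) (Set.mem_univ h) hu
  have hdiff : f h - f u ≤ K * ‖u - h‖ := by
    simpa only [Real.dist_eq, dist_eq_norm'] using (le_abs_self _).trans (hlip.dist_le_mul h u)
  simp only [tikhonov, sub_self, norm_zero, norm_sub_rev h u] at hgrowth
  have hquad : ‖u - h‖ * (‖u - h‖ * m) ≤ ‖u - h‖ * K := by linarith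
  rw [le_div_iff₀ hm]
  rcases (norm_nonneg (u - h)).eq_or_lt with hzero | hpos
  · rw [← hzero, zero_mul]
    exact K.2
  · exact le_of_mul_le_mul_left hquad hpos

theorem sum_leaveOneOut_le [CompleteSpace E] {ι : Type*} [Fintype ι] [DecidableEq ι]
    {g : ι → E → ℝ} (hconv : ∀ i, ConvexOn ℝ Set.univ (g i)) (hlip : ∀ i, LipschitzWith K (g i))
    (hm : 0 < m) {v : ι → E}
    (hv : ∀ i, IsMinOn (tikhonov m h fun w => ∑ j ∈ {i}ᶜ, g j w) Set.univ (v i)) (w : E) :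
    ∑ i, g i (v i) ≤ ∑ i, g i w + m / 2 * ‖w - h‖ ^ 2 + Fintype.card ι * (K ^ 2 / m) := by
  obtain ⟨u, hu⟩ := exists_isMinOn_tikhonov hm (convexOn_sum convex_univ fun i _ => hconv i)
    (lipschitzWith_sum fun i (_ : i ∈ Finset.univ) => hlip i) h
  have hstable : ∀ i, g i (v i) ≤ g i u + K ^ 2 / m := fun i => by
    have hsplit : (tikhonov m h fun w => ∑ j ∈ {i}ᶜ, g j w) + g i
        = tikhonov m h fun w => ∑ j, g j w := by
      funext w
      simp only [Pi.add_apply, tikhonov, Fintype.sum_eq_add_sum_compl i]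
      ring
    rw [← sub_le_iff_le_add']
    refine sub_le_sq_div_of_isMinOn_of_isMinOn_add hm
      (strongConvexOn_tikhonov (convexOn_sum convex_univ fun j _ => hconv j) m h) ?_
      (hlip i).lipschitzOnWith (Set.mem_univ u) (Set.mem_univ (v i)) (hv i) (hsplit ▸ hu)
    rw [hsplit]
    exact strongConvexOn_tikhonov (convexOn_sum convex_univ fun j _ => hconv j) m h
  have hu_le : ∑ i, g i u ≤ ∑ i, g i w + m / 2 * ‖w - h‖ ^ 2 :=
    (le_add_of_nonneg_right (by positivity)).trans (isMinOn_univ_iff.1 hu w)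
  calc ∑ i, g i (v i) ≤ ∑ i, (g i u + K ^ 2 / m) := Finset.sum_le_sum fun i _ => hstable i
    _ = ∑ i, g i u + Fintype.card ι * (K ^ 2 / m) := by
      rw [Finset.sum_add_distrib, Finset.sum_const, Finset.card_univ, nsmul_eq_mul]
    _ ≤ _ := by gcongr

end Tikhonov

section ProductMeasurability

variable {α Z : Type*} [MeasurableSpace α] [MeasurableSpace Z] {μ : Measure Z} {P : Measure α}

theorem aestronglyMeasurable_prod_of_ae_continuous {E : Type*} [TopologicalSpace E] [SFinite μ]
    [SFinite P] {loss : Z → E → ℝ} (hmeas : ∀ w, AEStronglyMeasurable (fun z => loss z w) μ)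
    (hcont : ∀ᵐ z ∂μ, Continuous (loss z)) {φ : α → E} (hφ : AEStronglyMeasurable φ P) :
    AEStronglyMeasurable (fun p : Z × α => loss p.1 (φ p.2)) (μ.prod P) := by
  obtain ⟨ψ, hψ, hφψ⟩ := hφ
  have hsimple : ∀ σ : SimpleFunc α E,
      AEStronglyMeasurable (fun p : Z × α => loss p.1 (σ p.2)) (μ.prod P) := fun σ => by
    have hsum : (fun p : Z × α => loss p.1 (σ p.2))
        = ∑ w ∈ σ.range, (Prod.snd ⁻¹' (σ ⁻¹' {w})).indicator fun p : Z × α => loss p.1 w := by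
      classical
      ext p
      simp [Finset.sum_apply, Set.indicator_apply]
    rw [hsum]
    exact Finset.aestronglyMeasurable_sum _ fun w _ =>
      (hmeas w).comp_fst.indicator (measurable_snd (σ.measurableSet_fiber w))
  refine aestronglyMeasurable_of_tendsto_ae Filter.atTop (fun k => hsimple (hψ.approx k)) ?_
  filter_upwards [Measure.quasiMeasurePreserving_fst.ae hcont,
    Measure.quasiMeasurePreserving_snd.ae hφψ] with p hp hpψ
  rw [hpψ]
  exact (hp.tendsto _).comp (hψ.tendsto_approx p.2)

theorem integrable_prod_of_ae_lipschitzWith {E : Type*} [NormedAddCommGroup E] [IsFiniteMeasure μ]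
    [IsFiniteMeasure P] {loss : Z → E → ℝ} {K : NNReal}
    (hint : ∀ w, Integrable (fun z => loss z w) μ) (hlip : ∀ᵐ z ∂μ, LipschitzWith K (loss z))
    {φ : α → E} (hφ : Integrable φ P) :
    Integrable (fun p : Z × α => loss p.1 (φ p.2)) (μ.prod P) := by
  have hdom : Integrable (fun p : Z × α => |loss p.1 0| + K * ‖φ p.2‖) (μ.prod P) :=
    ((hint 0).abs.comp_fst P).add ((hφ.norm.const_mul _).comp_snd μ)
  refine hdom.mono' (aestronglyMeasurable_prod_of_ae_continuous
    (fun w => (hint w).aestronglyMeasurable) (hlip.mono fun _ hz => hz.continuous)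
    hφ.aestronglyMeasurable) ?_
  filter_upwards [Measure.quasiMeasurePreserving_fst.ae hlip] with p hp
  have hdist := hp.dist_le_mul (φ p.2) 0
  rw [dist_zero_right, Real.dist_eq] at hdist
  rw [Real.norm_eq_abs]
  linarith [abs_sub_abs_le_abs_sub (loss p.1 (φ p.2)) (loss p.1 0)]

end ProductMeasurability

section BiasedERM

variable {E Z : Type*} {loss : Z → E → ℝ} {n : ℕ}

/-- The empirical risk of the hypothesis `w` on the sample `S`, for an arbitrary loss
`loss z w` of `w` on the example `z`. -/
def meanLoss (loss : Z → E → ℝ) (S : Fin n → Z) (w : E) : ℝ :=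
  (n : ℝ)⁻¹ * ∑ k, loss (S k) w

/-- The true risk of the hypothesis `w` under the task `μ`, for an arbitrary loss
`loss z w` of `w` on the example `z`. -/
def expectedLoss [MeasurableSpace Z] (loss : Z → E → ℝ) (μ : Measure Z) (w : E) : ℝ :=
  ∫ z, loss z w ∂μ

theorem integral_loss_removeNth [MeasurableSpace Z] {μ : Measure Z} [SigmaFinite μ]
    {A : (Fin n → Z) → E}
    (hint : Integrable (fun p : Z × (Fin n → Z) => loss p.1 (A p.2))
      (μ.prod (Measure.pi fun _ => μ))) (i : Fin (n + 1)) :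
    ∫ T, loss (T i) (A (i.removeNth T)) ∂(Measure.pi fun _ => μ)
      = ∫ S, expectedLoss loss μ (A S) ∂(Measure.pi fun _ => μ) :=
  ((measurePreserving_piFinSuccAbove (fun _ => μ) i).integral_comp' _).trans
    (integral_prod_symm _ hint)

variable [NormedAddCommGroup E] {m : ℝ} {h : E}

theorem isMinOn_tikhonov_sum_of_meanLoss (hn : n ≠ 0) {S : Fin n → Z} {s : Set E} {u : E}
    (hu : IsMinOn (tikhonov m h (meanLoss loss S)) s u) :
    IsMinOn (tikhonov (n * m) h fun w => ∑ k, loss (S k) w) s u := by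
  have hscale : ∀ w, tikhonov (n * m) h (fun w => ∑ k, loss (S k) w) w
      = n * tikhonov m h (meanLoss loss S) w := fun w => by
    simp only [tikhonov, meanLoss]
    field_simp
  intro w hw
  simp only [Set.mem_ofPred_eq, hscale]
  exact mul_le_mul_of_nonneg_left (hu hw) n.cast_nonneg

variable [InnerProductSpace ℝ E] {K : NNReal}

theorem sum_loss_removeNth_le [CompleteSpace E] (hn : n ≠ 0) (hm : 0 < m) {T : Fin (n + 1) → Z}
    (hconv : ∀ i, ConvexOn ℝ Set.univ (loss (T i))) (hlip : ∀ i, LipschitzWith K (loss (T i)))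
    {v : Fin (n + 1) → E}
    (hv : ∀ i, IsMinOn (tikhonov m h (meanLoss loss (i.removeNth T))) Set.univ (v i)) (w : E) :
    ∑ i, loss (T i) (v i) ≤ ∑ i, loss (T i) w
      + (n * (m / 2 * ‖w - h‖ ^ 2) + (n + 1) * (K ^ 2 / (m * n))) := by
  have hnm : 0 < n * m := by positivity
  have hbound := sum_leaveOneOut_le hconv hlip hnm (v := v) (h := h) (fun i => by
    simpa only [← Fin.image_succAbove_univ, Finset.sum_image i.succAbove_right_injective.injOn,
      Fin.removeNth_apply]
      using isMinOn_tikhonov_sum_of_meanLoss hn (hv i)) w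
  simp only [Fintype.card_fin, Nat.cast_add, Nat.cast_one] at hbound
  rw [mul_comm m n]
  linarith

variable [MeasurableSpace Z] {μ : Measure Z} [IsProbabilityMeasure μ]

theorem integrable_of_isMinOn_tikhonov (hn : n ≠ 0) (hm : 0 < m)
    (hconv : ∀ᵐ z ∂μ, ConvexOn ℝ Set.univ (loss z)) (hlip : ∀ᵐ z ∂μ, LipschitzWith K (loss z))
    {A : (Fin n → Z) → E} (hA : AEStronglyMeasurable A (Measure.pi fun _ => μ))
    (hmin : ∀ᵐ S ∂Measure.pi fun _ => μ, IsMinOn (tikhonov m h (meanLoss loss S)) Set.univ (A S)) :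
    Integrable A (Measure.pi fun _ => μ) := by
  have hgood : ∀ᵐ S ∂Measure.pi fun _ : Fin n => μ,
      ∀ k, ConvexOn ℝ Set.univ (loss (S k)) ∧ LipschitzWith K (loss (S k)) :=
    ae_all_iff.2 fun k =>
      (measurePreserving_eval (fun _ => μ) k).quasiMeasurePreserving.ae (hconv.and hlip)
  refine Integrable.of_bound hA (‖h‖ + ↑(∑ _k : Fin n, K) / (n * m)) ?_
  filter_upwards [hgood, hmin] with S hS hSmin
  have hdist := norm_sub_le_of_isMinOn_tikhonov (by positivity)
    (convexOn_sum convex_univ fun k _ => (hS k).1) (lipschitzWith_sum fun k _ => (hS k).2)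
    (isMinOn_tikhonov_sum_of_meanLoss hn hSmin)
  linarith [norm_le_norm_add_norm_sub' (A S) h]

theorem ae_sum_loss_removeNth_le [CompleteSpace E] (hn : n ≠ 0) (hm : 0 < m)
    (hconv : ∀ᵐ z ∂μ, ConvexOn ℝ Set.univ (loss z)) (hlip : ∀ᵐ z ∂μ, LipschitzWith K (loss z))
    {A : (Fin n → Z) → E}
    (hmin : ∀ᵐ S ∂Measure.pi fun _ => μ, IsMinOn (tikhonov m h (meanLoss loss S)) Set.univ (A S))
    (w : E) :
    ∀ᵐ T ∂Measure.pi fun _ : Fin (n + 1) => μ,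
      ∑ i, loss (T i) (A (i.removeNth T)) ≤ ∑ i, loss (T i) w
        + (n * (m / 2 * ‖w - h‖ ^ 2) + (n + 1) * (K ^ 2 / (m * n))) := by
  have hgood : ∀ᵐ T ∂Measure.pi fun _ : Fin (n + 1) => μ,
      ∀ i, ConvexOn ℝ Set.univ (loss (T i)) ∧ LipschitzWith K (loss (T i)) :=
    ae_all_iff.2 fun i =>
      (measurePreserving_eval (fun _ => μ) i).quasiMeasurePreserving.ae (hconv.and hlip)
  have hloo : ∀ᵐ T ∂Measure.pi fun _ : Fin (n + 1) => μ, ∀ i : Fin (n + 1),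
      IsMinOn (tikhonov m h (meanLoss loss (i.removeNth T))) Set.univ (A (i.removeNth T)) :=
    ae_all_iff.2 fun i =>
      (measurePreserving_piFinSuccAbove (fun _ => μ) i).quasiMeasurePreserving.ae
        (Measure.quasiMeasurePreserving_snd.ae hmin)
  filter_upwards [hgood, hloo] with T hT hTmin
  exact sum_loss_removeNth_le hn hm (fun i => (hT i).1) (fun i => (hT i).2) hTmin w

theorem integral_expectedLoss_le [CompleteSpace E] (hn : n ≠ 0) (hm : 0 < m)
    (hconv : ∀ᵐ z ∂μ, ConvexOn ℝ Set.univ (loss z)) (hlip : ∀ᵐ z ∂μ, LipschitzWith K (loss z))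
    (hint : ∀ w, Integrable (fun z => loss z w) μ)
    {A : (Fin n → Z) → E} (hA : AEStronglyMeasurable A (Measure.pi fun _ => μ))
    (hmin : ∀ᵐ S ∂Measure.pi fun _ => μ, IsMinOn (tikhonov m h (meanLoss loss S)) Set.univ (A S))
    (w : E) :
    ∫ S, expectedLoss loss μ (A S) ∂(Measure.pi fun _ => μ)
      ≤ expectedLoss loss μ w + (m / 2 * ‖w - h‖ ^ 2 + K ^ 2 / (m * n)) := by
  have hprod : Integrable (fun p : Z × (Fin n → Z) => loss p.1 (A p.2))
      (μ.prod (Measure.pi fun _ => μ)) :=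
    integrable_prod_of_ae_lipschitzWith hint hlip
      (integrable_of_isMinOn_tikhonov hn hm hconv hlip hA hmin)
  have hint_loo : ∀ i : Fin (n + 1), Integrable
      (fun T : Fin (n + 1) → Z => loss (T i) (A (i.removeNth T))) (Measure.pi fun _ => μ) :=
    fun i => (measurePreserving_piFinSuccAbove (fun _ => μ) i).integrable_comp_of_integrable hprod
  have hint_w : ∀ i : Fin (n + 1),
      Integrable (fun T : Fin (n + 1) → Z => loss (T i) w) (Measure.pi fun _ => μ) :=
    fun i => (measurePreserving_eval (fun _ => μ) i).integrable_comp_of_integrable (hint w)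
  have hintegral_w : ∀ i : Fin (n + 1),
      ∫ T : Fin (n + 1) → Z, loss (T i) w ∂(Measure.pi fun _ => μ) = expectedLoss loss μ w :=
    fun i => integral_comp_eval (μ := fun _ => μ) (i := i) (hint w).aestronglyMeasurable
  have hmono := integral_mono_ae (integrable_finsetSum _ fun i _ => hint_loo i)
    ((integrable_finsetSum _ fun i _ => hint_w i).add (integrable_const _))
    (ae_sum_loss_removeNth_le hn hm hconv hlip hmin w)
  simp only [Pi.add_apply] at hmono
  rw [integral_finsetSum _ fun i _ => hint_loo i,
    integral_add (integrable_finsetSum _ fun i _ => hint_w i) (integrable_const _),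
    integral_finsetSum _ fun i _ => hint_w i] at hmono
  simp only [integral_loss_removeNth hprod, hintegral_w, integral_const, Finset.sum_const,
    Finset.card_univ, Fintype.card_fin, nsmul_eq_mul, probReal_univ, one_smul, Nat.cast_add,
    Nat.cast_one] at hmono
  have hpenalty : 0 ≤ m / 2 * ‖w - h‖ ^ 2 := by positivity
  refine le_of_mul_le_mul_left ?_ (n.cast_add_one_pos (α := ℝ))
  linarith

end BiasedERM

theorem convexOn_comp_inner {E : Type*} [NormedAddCommGroup E] [InnerProductSpace ℝ E] {f : ℝ → ℝ}
    (hf : ConvexOn ℝ Set.univ f) (x : E) : ConvexOn ℝ Set.univ fun w => f ⟪x, w⟫_ℝ :=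
  hf.comp_linearMap (innerₗ E x)

theorem lipschitzWith_comp_inner {E : Type*} [NormedAddCommGroup E] [InnerProductSpace ℝ E]
    {f : ℝ → ℝ} {L R : NNReal} (hf : LipschitzWith L f) {x : E} (hx : ‖x‖ ≤ R) :
    LipschitzWith (R * L) fun w => f ⟪x, w⟫_ℝ := by
  have hinner : LipschitzWith R fun w => ⟪x, w⟫_ℝ :=
    (innerSL ℝ x).lipschitz.weaken (by simpa [← NNReal.coe_le_coe] using hx)
  simpa only [mul_comm, Function.comp_def] using hf.comp hinner

theorem half_mul_add_sq_div_eq {K V s m : ℝ} (hK : K ≠ 0) (hV : V ≠ 0) (hs : s ≠ 0)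
    (hm : m = K / V * s⁻¹) : m / 2 * (2 * V ^ 2) + K ^ 2 / (m * s ^ 2) = V * (2 * K) * s⁻¹ := by
  subst hm
  field_simp
  ring

theorem stmt18_general {E Z Θ : Type*} [NormedAddCommGroup E] [InnerProductSpace ℝ E]
    [CompleteSpace E] [MeasurableSpace Z] [MeasurableSpace Θ] {n : ℕ} (hn : n ≠ 0) {K : NNReal}
    (hK : 0 < K) {loss : Z → E → ℝ} (ρ : Measure Θ) [IsProbabilityMeasure ρ]
    {task : Θ → Measure Z} [∀ θ, IsProbabilityMeasure (task θ)]
    (hconv : ∀ θ, ∀ᵐ z ∂task θ, ConvexOn ℝ Set.univ (loss z))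
    (hlip : ∀ θ, ∀ᵐ z ∂task θ, LipschitzWith K (loss z))
    (hint : ∀ θ w, Integrable (fun z => loss z w) (task θ))
    {w : Θ → E} {h : E} {V : ℝ} (hVpos : 0 < V)
    (hVint : Integrable (fun θ => ‖w θ - h‖ ^ 2) ρ)
    (hV : V ^ 2 = 1 / 2 * ∫ θ, ‖w θ - h‖ ^ 2 ∂ρ)
    {m : ℝ} (hm : m = K / V * (√n)⁻¹) {A : (Fin n → Z) → E}
    (hA : ∀ θ, AEStronglyMeasurable A (Measure.pi fun _ => task θ))
    (hmin : ∀ θ, ∀ᵐ S ∂Measure.pi fun _ => task θ,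
      IsMinOn (tikhonov m h (meanLoss loss S)) Set.univ (A S))
    (hint_A : Integrable
      (fun θ => ∫ S, expectedLoss loss (task θ) (A S) ∂(Measure.pi fun _ => task θ)) ρ)
    (hint_w : Integrable (fun θ => expectedLoss loss (task θ) (w θ)) ρ) :
    (∫ θ, ∫ S, expectedLoss loss (task θ) (A S) ∂(Measure.pi fun _ => task θ) ∂ρ)
      - ∫ θ, expectedLoss loss (task θ) (w θ) ∂ρ ≤ V * (2 * K) * (√n)⁻¹ := by
  have hsqrt : 0 < √(n : ℝ) := by positivity
  have hmpos : 0 < m := by rw [hm]; positivity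
  have hpenalty_int : Integrable (fun θ => m / 2 * ‖w θ - h‖ ^ 2 + K ^ 2 / (m * n)) ρ :=
    (hVint.const_mul _).add (integrable_const _)
  have hpenalty : ∫ θ, (m / 2 * ‖w θ - h‖ ^ 2 + K ^ 2 / (m * n)) ∂ρ = V * (2 * K) * (√n)⁻¹ := by
    rw [integral_add (hVint.const_mul _) (integrable_const _), integral_const_mul, integral_const,
      probReal_univ, one_smul, ← half_mul_add_sq_div_eq (NNReal.coe_ne_zero.2 hK.ne') hVpos.ne'
        hsqrt.ne' hm, Real.sq_sqrt n.cast_nonneg, hV]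
    ring
  rw [← hpenalty, sub_le_iff_le_add', ← integral_add hint_w hpenalty_int]
  exact integral_mono hint_A (hint_w.add hpenalty_int) fun θ =>
    integral_expectedLoss_le hn hmpos (hconv θ) (hlip θ) (hint θ) (hA θ) (hmin θ) (w θ)

/-- Excess transfer risk bound for the biased ERM with a fixed bias `h`:
with `λ = (RL/Var_h)·n^{-1/2}`, the transfer risk of the biased ERM exceeds the oracle risk
by at most `2RL·Var_h·n^{-1/2}`. -/
theorem stmt18
    (d n : ℕ) (hd : 1 ≤ d) (hn : 1 ≤ n)
    (R L : ℝ) (hR : 0 < R) (hL : 0 < L)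
    (Y : Set ℝ) (ℓ : ℝ → ℝ → ℝ)
    (hℓ0 : ∀ a y, y ∈ Y → 0 ≤ ℓ a y)
    (hℓconv : ∀ y ∈ Y, ConvexOn ℝ Set.univ fun a => ℓ a y)
    (hℓlip : ∀ y ∈ Y, ∀ a b, |ℓ a y - ℓ b y| ≤ L * |a - b|)
    -- the environment of tasks
    (Θ : Type*) [MeasurableSpace Θ]
    (ρ : Measure Θ) [IsProbabilityMeasure ρ]
    (task : Θ → Measure (Pt d))
    (htaskprob : ∀ θ, IsProbabilityMeasure (task θ))
    [hsig : ∀ θ, SigmaFinite (task θ)]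
    (htaskY : ∀ θ, ∀ᵐ z ∂(task θ), z.2 ∈ Y)
    (htaskR : ∀ θ, ∀ᵐ z ∂(task θ), ‖z.1‖ ≤ R)
    (hlossInt : ∀ θ w, Integrable (fun z : Pt d => ℓ (⟪z.1, w⟫_ℝ) (z.2)) (task θ))
    -- each task has a minimal-norm minimizer of the true risk
    (wstar : Θ → Vec d)
    (hwmin : ∀ θ w, trueRisk ℓ (task θ) (wstar θ) ≤ trueRisk ℓ (task θ) w)
    (hwnorm : ∀ θ w, trueRisk ℓ (task θ) w = trueRisk ℓ (task θ) (wstar θ) →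
      ‖wstar θ‖ ≤ ‖w‖)
    -- the fixed bias and its variance
    (h : Vec d)
    (Varh : ℝ) (hVarpos : 0 < Varh)
    (hVarInt : Integrable (fun θ => ‖wstar θ - h‖ ^ 2) ρ)
    (hVar : Varh ^ 2 = 1 / 2 * ∫ θ, ‖wstar θ - h‖ ^ 2 ∂ρ)
    -- the regularization parameter
    (lam : ℝ) (hlam : lam = R * L / Varh * (Real.sqrt n)⁻¹)
    -- the biased ERM, assumed measurable in the data
    (erm : (Fin n → Pt d) → Vec d)
    (hermmeas : Measurable erm)
    (herm : ∀ S w, regRisk ℓ lam S h (erm S) ≤ regRisk ℓ lam S h w)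
    -- integrability of the transfer-risk integrands
    (hIntInner : ∀ θ, Integrable (fun S => trueRisk ℓ (task θ) (erm S))
      (Measure.pi fun _ : Fin n => task θ))
    (hIntOuter : Integrable (fun θ =>
      ∫ S, trueRisk ℓ (task θ) (erm S)
        ∂(Measure.pi fun _ : Fin n => task θ)) ρ)
    (hIntOracle : Integrable (fun θ => trueRisk ℓ (task θ) (wstar θ)) ρ) :
    (∫ θ, (∫ S, trueRisk ℓ (task θ) (erm S)
        ∂(Measure.pi fun _ : Fin n => task θ)) ∂ρ)
      - (∫ θ, trueRisk ℓ (task θ) (wstar θ) ∂ρ)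
      ≤ Varh * (2 * R * L) * (Real.sqrt n)⁻¹ := by
  lift R to NNReal using hR.le
  lift L to NNReal using hL.le
  have hbound := stmt18_general (K := R * L) (loss := fun (z : Pt d) w => ℓ ⟪z.1, w⟫_ℝ z.2)
    (w := wstar) (A := erm) (by lia)
    (by exact_mod_cast mul_pos hR hL) ρ
    (fun θ => (htaskY θ).mono fun z hz => convexOn_comp_inner (hℓconv _ hz) z.1)
    (fun θ => ((htaskY θ).and (htaskR θ)).mono fun z hz =>
      lipschitzWith_comp_inner (.of_dist_le_mul (hℓlip _ hz.1)) hz.2)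
    hlossInt hVarpos hVarInt hVar (by simpa using hlam)
    (fun θ => hermmeas.aestronglyMeasurable)
    (fun θ => .of_forall fun S => isMinOn_univ_iff.2 (herm S)) hIntOuter hIntOracle
  rwa [NNReal.coe_mul, ← mul_assoc 2] at hbound
end
end
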